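/- If A is a set of positive integers such that the series Σ_{n∈A} 1/n diverges (i.e. the partial sums Σ_{n∈A, n≤N} 1/n are unbounded as N → ∞), then A contains infinitely many non-trivial three-term arithmetic progressions; that is, the set of triples (x,y,z) ∈ A³ with x + y = 2z and x ≠ y is infinite. -/

import Mathlib

/-!
By contradiction, remove finitely many elements of `A` so that no progression is left. It then
suffices to show that a progression-free subset of `{1, …, 2 ^ k}` has at most `O(2 ^ k / k ^ 2)`
elements for large `k`, since the dyadic blocks of `∑ 1 / n` are then summable. This follows from
the theorem of Kelley and Meka, proved here in a finite abelian group `G` on which doubling is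
injective: a progression-free set has density below `2 ^ (-L)` once `log |G|` exceeds a certain
polynomial in `L`. The cyclic groups of odd order contain the intervals.

The proof is the density increment on Bohr sets, following Bloom and Sisask. If a progression-free
`A` has density `α ≥ 2 ^ (-L)` on a regular Bohr set `B`, then the balanced function of `A` on `B`
correlates with the doubles of `A` far more negatively than it should, so by Hölder a moment of
order `O(L)` of its self-convolution, hence of its autocorrelation, is large. Unbalancing turns this
into a lower bound for a high moment of the autocorrelation of `A`, and sifting, that is,
intersecting `A` with random translates of itself, yields a set of relative density
`2 ^ (-O(L ^ 2))` whose differences almost all are popular differences of `A`. By the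
almost-periodicity of Croot and Sisask together with Chang's theorem, the popularity persists along
a Bohr set whose rank is larger by a polynomial in `L` only, on a translate of which `A` has density
at least `(1 + 1 / 500) α`. As densities are at most `1`, this can happen only `O(L)` times.
-/

namespace KelleyMeka

open Finset

lemma pow_mul_le_of_forall_mul_le {f : ℝ → ℝ} {a c r : ℝ} (hr : 0 ≤ r) {n : ℕ}
    (h : ∀ j < n, r * f (a + 2 * j * c) ≤ f (a + 2 * (j + 1) * c)) :
    r ^ n * f a ≤ f (a + 2 * n * c) := by
  induction n with
  | zero => simp
  | succ n ih =>
    calc r ^ (n + 1) * f a = r * (r ^ n * f a) := by ring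
      _ ≤ r * f (a + 2 * n * c) :=
        mul_le_mul_of_nonneg_left (ih fun j hj ↦ h j (hj.trans n.lt_succ_self)) hr
      _ ≤ _ := by exact_mod_cast h n n.lt_succ_self

lemma pow_lt_one_add_one_div_pow {d m : ℕ} (hd : d ≠ 0) (hm : m ≠ 0) :
    (81 : ℝ) ^ d < (1 + 1 / m) ^ (7 * d * m) := by
  have htwo : (2 : ℝ) ≤ (1 + 1 / m) ^ m := by
    have hbernoulli := one_add_mul_le_pow (a := 1 / (m : ℝ)) (le_trans (by norm_num)
      (by positivity : (0 : ℝ) ≤ 1 / m)) m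
    rwa [mul_one_div_cancel (by exact_mod_cast hm), one_add_one_eq_two] at hbernoulli
  calc (81 : ℝ) ^ d < 128 ^ d := pow_lt_pow_left₀ (by norm_num) (by norm_num) hd
    _ = 2 ^ (7 * d) := by rw [pow_mul]; norm_num
    _ ≤ ((1 + 1 / m) ^ m) ^ (7 * d) := by gcongr
    _ = _ := by rw [← pow_mul, mul_comm m]

lemma abs_sub_le_of_floor_div_eq {a b r : ℝ} (hr : 0 < r) (h : ⌊a / r⌋ = ⌊b / r⌋) :
    |a - b| ≤ r := by
  have hlt := Int.abs_sub_lt_one_of_floor_eq_floor h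
  rw [← sub_div, abs_div, abs_of_pos hr, div_lt_one hr] at hlt
  exact hlt.le

lemma floor_div_mem_Icc {a r : ℝ} {n : ℕ} (hr : 0 < r) (ha : |a| ≤ n * r) :
    ⌊a / r⌋ ∈ Icc (-n : ℤ) n := by
  have habs : |a / r| ≤ n := by rwa [abs_div, abs_of_pos hr, div_le_iff₀ hr]
  rw [mem_Icc, Int.le_floor]
  constructor
  · exact_mod_cast (abs_le.1 habs).1
  · exact_mod_cast (Int.floor_le _).trans (abs_le.1 habs).2

section Characters

variable {G : Type*} [AddCommGroup G] {x y : G}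

lemma card_le_card_mul_card_of_sub_mem {C : Type*} {s u : Finset G} {t : Finset C}
    (c : G → C) (hst : ∀ x ∈ s, c x ∈ t) (hsub : ∀ x ∈ s, ∀ y ∈ s, c x = c y → x - y ∈ u) :
    #s ≤ #t * #u := by
  classical
  rw [mul_comm]
  refine card_le_mul_card_image_of_maps_to hst _ fun b _ ↦ ?_
  obtain hempty | ⟨y, hy⟩ := {a ∈ s | c a = b}.eq_empty_or_nonempty
  · simp [hempty]
  · rw [mem_filter] at hy
    refine card_le_card_of_injOn (· - y) (fun x hx ↦ ?_) (sub_left_injective.injOn)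
    rw [mem_coe, mem_filter] at hx
    exact hsub x hx.1 y hy.1 (hx.2.trans hy.2.symm)

/-- The square of side `r` containing `γ x - 1`, coded by its integer coordinates. -/
noncomputable def phaseCell (r : ℝ) (x : G) (γ : AddChar G ℂ) : ℤ × ℤ :=
  (⌊(γ x - 1).re / r⌋, ⌊(γ x - 1).im / r⌋)

lemma phaseCell_mem {γ : AddChar G ℂ} {r : ℝ} {n : ℕ} (hr : 0 < r) (hx : ‖1 - γ x‖ ≤ n * r) :
    phaseCell r x γ ∈ Icc (-n : ℤ) n ×ˢ Icc (-n : ℤ) n := by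
  rw [norm_sub_rev] at hx
  exact mem_product.2 ⟨floor_div_mem_Icc hr ((Complex.abs_re_le_norm _).trans hx),
    floor_div_mem_Icc hr ((Complex.abs_im_le_norm _).trans hx)⟩

variable [Finite G]

lemma norm_one_sub_apply_sub (γ : AddChar G ℂ) (x y : G) : ‖1 - γ (x - y)‖ = ‖γ x - γ y‖ := by
  have hfactor : γ x - γ y = -(γ y * (1 - γ (x - y))) := by
    rw [mul_sub, ← AddChar.map_add_eq_mul, add_sub_cancel]; ring
  rw [hfactor, norm_neg, norm_mul, AddChar.norm_apply, one_mul]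

lemma norm_one_sub_apply_neg (γ : AddChar G ℂ) (x : G) : ‖1 - γ (-x)‖ = ‖1 - γ x‖ := by
  simpa using norm_one_sub_apply_sub γ 0 x

lemma norm_one_sub_apply_add_le (γ : AddChar G ℂ) (x y : G) :
    ‖1 - γ (x + y)‖ ≤ ‖1 - γ x‖ + ‖1 - γ y‖ := by
  have h := norm_sub_le_norm_sub_add_norm_sub (γ x) 1 (γ (-y))
  rwa [← norm_one_sub_apply_sub, sub_neg_eq_add, norm_sub_rev (γ x), norm_one_sub_apply_neg] at h

lemma norm_one_sub_apply_sub_le_of_phaseCell_eq {γ : AddChar G ℂ} {r : ℝ} (hr : 0 < r)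
    (h : phaseCell r x γ = phaseCell r y γ) : ‖1 - γ (x - y)‖ ≤ 2 * r := by
  rw [phaseCell, phaseCell, Prod.mk.injEq] at h
  have hre := abs_sub_le_of_floor_div_eq hr h.1
  have him := abs_sub_le_of_floor_div_eq hr h.2
  rw [← Complex.sub_re, sub_sub_sub_cancel_right] at hre
  rw [← Complex.sub_im, sub_sub_sub_cancel_right] at him
  rw [norm_one_sub_apply_sub, two_mul]
  exact (Complex.norm_le_abs_re_add_abs_im _).trans (add_le_add hre him)

end Characters

/-! ### Bohr sets -/

section BohrSet

variable {G : Type*} [AddCommGroup G] [Fintype G] {Γ Γ' : Finset (AddChar G ℂ)} {ρ σ κ η : ℝ}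
  {x y : G}

/-- The Bohr set of the points at which every character of `Γ` is within `ρ` of `1`; the radius is
measured by the chordal distance `‖1 - γ x‖`, so radius `2` gives the whole group. -/
noncomputable def bohrSet (Γ : Finset (AddChar G ℂ)) (ρ : ℝ) : Finset G :=
  {x | ∀ γ ∈ Γ, ‖1 - γ x‖ ≤ ρ}

lemma mem_bohrSet : x ∈ bohrSet Γ ρ ↔ ∀ γ ∈ Γ, ‖1 - γ x‖ ≤ ρ := by simp [bohrSet]

lemma bohrSet_mono (h : ρ ≤ σ) : bohrSet Γ ρ ⊆ bohrSet Γ σ := fun _ hx ↦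
  mem_bohrSet.2 fun γ hγ ↦ (mem_bohrSet.1 hx γ hγ).trans h

lemma bohrSet_anti (h : Γ ⊆ Γ') : bohrSet Γ' ρ ⊆ bohrSet Γ ρ := fun _ hx ↦
  mem_bohrSet.2 fun γ hγ ↦ mem_bohrSet.1 hx γ (h hγ)

lemma card_bohrSet_mono (h : ρ ≤ σ) : (#(bohrSet Γ ρ) : ℝ) ≤ #(bohrSet Γ σ) := by
  exact_mod_cast card_le_card (bohrSet_mono h)

lemma add_mem_bohrSet (hx : x ∈ bohrSet Γ ρ) (hy : y ∈ bohrSet Γ σ) : x + y ∈ bohrSet Γ (ρ + σ) :=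
  mem_bohrSet.2 fun γ hγ ↦ (norm_one_sub_apply_add_le γ x y).trans
    (add_le_add (mem_bohrSet.1 hx γ hγ) (mem_bohrSet.1 hy γ hγ))

lemma neg_mem_bohrSet (hx : x ∈ bohrSet Γ ρ) : -x ∈ bohrSet Γ ρ :=
  mem_bohrSet.2 fun γ hγ ↦ (norm_one_sub_apply_neg γ x).trans_le (mem_bohrSet.1 hx γ hγ)

lemma sub_mem_bohrSet (hx : x ∈ bohrSet Γ ρ) (hy : y ∈ bohrSet Γ σ) : x - y ∈ bohrSet Γ (ρ + σ) :=
  sub_eq_add_neg x y ▸ add_mem_bohrSet hx (neg_mem_bohrSet hy)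

lemma zero_mem_bohrSet (h : 0 ≤ ρ) : (0 : G) ∈ bohrSet Γ ρ := by simp [mem_bohrSet, h]

lemma bohrSet_nonempty (h : 0 ≤ ρ) : (bohrSet Γ ρ).Nonempty := ⟨0, zero_mem_bohrSet h⟩

lemma card_bohrSet_pos (h : 0 ≤ ρ) : (0 : ℝ) < #(bohrSet Γ ρ) := by
  exact_mod_cast (bohrSet_nonempty h).card_pos

lemma sum_mem_bohrSet {ι : Type*} {s : Finset ι} {u : ι → G} (hu : ∀ i ∈ s, u i ∈ bohrSet Γ ρ) :
    ∑ i ∈ s, u i ∈ bohrSet Γ (#s * ρ) := by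
  classical
  induction s using Finset.induction_on with
  | empty => simpa using zero_mem_bohrSet le_rfl
  | insert a s ha ih =>
    rw [sum_insert ha, card_insert_of_notMem ha, Nat.cast_add_one, add_one_mul, add_comm (_ * ρ)]
    exact add_mem_bohrSet (hu a (mem_insert_self _ _)) (ih fun i hi ↦ hu i (mem_insert_of_mem hi))

lemma bohrSet_two (Γ : Finset (AddChar G ℂ)) : bohrSet Γ 2 = univ := by
  refine eq_univ_iff_forall.2 fun x ↦ mem_bohrSet.2 fun γ _ ↦ (norm_sub_le _ _).trans ?_
  rw [AddChar.norm_apply, norm_one, one_add_one_eq_two]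

/-! ### Doubling and regularity of Bohr sets -/

lemma card_bohrSet_two_mul_le {d : ℕ} (hd : #Γ ≤ d) (hρ : 0 < ρ) :
    #(bohrSet Γ (2 * ρ)) ≤ 81 ^ d * #(bohrSet Γ ρ) := by
  let cells : Finset (Γ → ℤ × ℤ) := Fintype.piFinset fun _ ↦ Icc (-4) 4 ×ˢ Icc (-4) 4
  have hcells : #cells ≤ 81 ^ d := by
    simpa [cells] using Nat.pow_le_pow_right (by norm_num) hd
  refine (card_le_card_mul_card_of_sub_mem (t := cells) (fun x γ ↦ phaseCell (ρ / 2) x γ)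
    (fun x hx ↦ Fintype.mem_piFinset.2 fun γ ↦ ?_) fun x _ y _ hxy ↦ ?_).trans
    (Nat.mul_le_mul_right _ hcells)
  · refine phaseCell_mem (n := 4) (half_pos hρ) ((mem_bohrSet.1 hx γ γ.2).trans_eq ?_)
    push_cast; ring
  · refine mem_bohrSet.2 fun γ hγ ↦ (norm_one_sub_apply_sub_le_of_phaseCell_eq (half_pos hρ)
      (congr_fun hxy ⟨γ, hγ⟩)).trans_eq (mul_div_cancel₀ _ two_ne_zero)

lemma card_le_pow_mul_card_bohrSet {d : ℕ} (hd : #Γ ≤ d) (j : ℕ) :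
    Fintype.card G ≤ 81 ^ (d * j) * #(bohrSet Γ (2 / 2 ^ j)) := by
  induction j with
  | zero => simp [bohrSet_two]
  | succ j ih =>
    have hdouble := card_bohrSet_two_mul_le hd (ρ := 2 / 2 ^ (j + 1)) (by positivity)
    rw [show (2 : ℝ) * (2 / 2 ^ (j + 1)) = 2 / 2 ^ j by rw [pow_succ]; field_simp] at hdouble
    calc _ ≤ _ := ih
      _ ≤ 81 ^ (d * j) * (81 ^ d * #(bohrSet Γ (2 / 2 ^ (j + 1)))) := Nat.mul_le_mul_left _ hdouble
      _ = _ := by rw [Nat.mul_succ, pow_add _ (d * j), mul_assoc]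

/-- Regularity of the Bohr set of radius `ρ`: moving the radius by `κ` in either direction changes
the size by a factor of at most `1 + η` in total. -/
def IsRegular (Γ : Finset (AddChar G ℂ)) (ρ κ η : ℝ) : Prop :=
  (#(bohrSet Γ (ρ + κ)) : ℝ) ≤ (1 + η) * #(bohrSet Γ (ρ - κ))

lemma IsRegular.card_le (h : IsRegular Γ ρ κ η) (hκ : 0 ≤ κ) :
    (#(bohrSet Γ ρ) : ℝ) ≤ (1 + η) * #(bohrSet Γ (ρ - κ)) :=
  (card_bohrSet_mono (le_add_of_nonneg_right hκ)).trans h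

lemma IsRegular.card_add_le (h : IsRegular Γ ρ κ η) (hκ : 0 ≤ κ) (hη : 0 ≤ η) :
    (#(bohrSet Γ (ρ + κ)) : ℝ) ≤ (1 + η) * #(bohrSet Γ ρ) :=
  h.trans (mul_le_mul_of_nonneg_left (card_bohrSet_mono (sub_le_self _ hκ)) (by positivity))

/- Otherwise the size would grow by `1 + 1 / m` on each of the `7 * d * m` intervals of length
`2 * ρ₀ / (28 * d * m)` that make up `[ρ₀ / 2, ρ₀]`, contradicting the doubling bound. -/
lemma exists_isRegular {d m : ℕ} (hd : #Γ ≤ d) (hd0 : d ≠ 0) (hm : m ≠ 0) {ρ₀ : ℝ} (hρ : 0 < ρ₀) :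
    ∃ ρ, ρ₀ / (28 * d * m) ≤ ρ ∧ ρ ≤ ρ₀ ∧ IsRegular Γ ρ (ρ₀ / (28 * d * m)) (1 / m) := by
  set κ : ℝ := ρ₀ / (28 * d * m) with hκ
  have hdm : (1 : ℝ) ≤ d * m := by exact_mod_cast Nat.one_le_iff_ne_zero.2 (mul_ne_zero hd0 hm)
  have hκpos : 0 < κ := div_pos hρ (by linarith)
  have hκmul : κ * (28 * (d * m)) = ρ₀ := by rw [hκ]; field_simp
  by_contra! hirreg
  have hgrow : ∀ j < 7 * d * m, (1 + 1 / m) * (#(bohrSet Γ (ρ₀ / 2 + 2 * j * κ)) : ℝ) ≤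
      #(bohrSet Γ (ρ₀ / 2 + 2 * (j + 1) * κ)) := by
    intro j hj
    have hj' : ((j : ℝ) + 1) * κ ≤ 7 * (d * m) * κ := by
      gcongr; rw [← mul_assoc]; exact_mod_cast hj
    have hj0 : (0 : ℝ) ≤ j * κ := by positivity
    have h := hirreg (ρ₀ / 2 + (2 * j + 1) * κ) (by nlinarith) (by nlinarith)
    rw [IsRegular, not_le, show ρ₀ / 2 + (2 * j + 1) * κ + κ = ρ₀ / 2 + 2 * (j + 1) * κ by ring,
      show ρ₀ / 2 + (2 * j + 1) * κ - κ = ρ₀ / 2 + 2 * j * κ by ring] at h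
    exact h.le
  have hpow := pow_mul_le_of_forall_mul_le (f := fun r ↦ (#(bohrSet Γ r) : ℝ)) (by positivity) hgrow
  have hdouble : (#(bohrSet Γ (2 * (ρ₀ / 2))) : ℝ) ≤ 81 ^ d * #(bohrSet Γ (ρ₀ / 2)) := by
    exact_mod_cast card_bohrSet_two_mul_le hd (half_pos hρ)
  rw [show 2 * (ρ₀ / 2) = ρ₀ / 2 + 2 * ↑(7 * d * m) * κ by push_cast; linarith] at hdouble
  exact (pow_lt_one_add_one_div_pow hd0 hm).not_ge
    (le_of_mul_le_mul_right (hpow.trans hdouble) (card_bohrSet_pos (half_pos hρ).le))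

end BohrSet

/-! ### Moments of autocorrelations and self-convolutions -/

section Moments

variable {G : Type*} [AddCommGroup G] [Fintype G]

/-- The unnormalised autocorrelation `f ∘ f` of a function on a finite group. -/
noncomputable def autocorr (f : G → ℝ) (u : G) : ℝ := ∑ y, f y * f (y + u)

/-- The unnormalised convolution `f ∗ f` of a function with itself. -/
noncomputable def selfConv (f : G → ℝ) (u : G) : ℝ := ∑ y, f y * f (u - y)

lemma autocorr_sub (f : G → ℝ) (b b' : G) :
    autocorr f (b - b') = ∑ y, f (y + b) * f (y + b') := by
  refine (Fintype.sum_equiv (Equiv.addRight b') _ _ fun y ↦ ?_).symm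
  simp only [Equiv.coe_addRight]
  rw [mul_comm]
  congr 2; abel

lemma selfConv_add_sub (f : G → ℝ) (t b b' : G) :
    selfConv f (t + b - b') = ∑ y, f (y + b) * f (t - (y + b')) := by
  refine (Fintype.sum_equiv (Equiv.addRight b) _ _ fun y ↦ ?_).symm
  simp only [Equiv.coe_addRight]
  congr 2; abel

lemma autocorr_comp_sub_left (f : G → ℝ) (t u : G) :
    autocorr (fun x ↦ f (t - x)) u = autocorr f u := by
  refine Fintype.sum_equiv (Equiv.subLeft (t - u)) _ _ fun y ↦ ?_
  simp only [Equiv.subLeft_apply]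
  rw [mul_comm]
  congr 2 <;> abel

lemma sum_sum_sum_mul_pow (D : Finset G) (f g : G → ℝ) (k : ℕ) :
    ∑ b ∈ D, ∑ b' ∈ D, (∑ y, f (y + b) * g (y + b')) ^ k =
      ∑ y : Fin k → G, (∑ b ∈ D, ∏ i, f (y i + b)) * ∑ b' ∈ D, ∏ i, g (y i + b') := by
  simp only [Fintype.sum_pow, prod_mul_distrib, sum_mul_sum]
  exact (sum_congr rfl fun b _ ↦ sum_comm).trans sum_comm

lemma sum_sum_autocorr_pow (D : Finset G) (f : G → ℝ) (k : ℕ) :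
    ∑ b ∈ D, ∑ b' ∈ D, autocorr f (b - b') ^ k =
      ∑ y : Fin k → G, (∑ b ∈ D, ∏ i, f (y i + b)) ^ 2 := by
  simp only [autocorr_sub, sum_sum_sum_mul_pow, sq]

lemma sum_sum_autocorr_pow_nonneg (D : Finset G) (f : G → ℝ) (k : ℕ) :
    0 ≤ ∑ b ∈ D, ∑ b' ∈ D, autocorr f (b - b') ^ k := by
  rw [sum_sum_autocorr_pow]; positivity

lemma sum_sum_selfConv_pow_le (D : Finset G) (f : G → ℝ) (k : ℕ) (t : G) :
    ∑ b ∈ D, ∑ b' ∈ D, selfConv f (t + b - b') ^ k ≤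
      ∑ b ∈ D, ∑ b' ∈ D, autocorr f (b - b') ^ k := by
  let u (y : Fin k → G) : ℝ := ∑ b ∈ D, ∏ i, f (y i + b)
  let v (y : Fin k → G) : ℝ := ∑ b ∈ D, ∏ i, f (t - (y i + b))
  have hu : ∑ b ∈ D, ∑ b' ∈ D, autocorr f (b - b') ^ k = ∑ y, u y ^ 2 := sum_sum_autocorr_pow ..
  have hv : ∑ b ∈ D, ∑ b' ∈ D, autocorr f (b - b') ^ k = ∑ y, v y ^ 2 := by
    simpa only [autocorr_comp_sub_left] using sum_sum_autocorr_pow D (fun x ↦ f (t - x)) k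
  calc ∑ b ∈ D, ∑ b' ∈ D, selfConv f (t + b - b') ^ k = ∑ y, u y * v y := by
        simp only [selfConv_add_sub]
        exact sum_sum_sum_mul_pow D f (fun x ↦ f (t - x)) k
    _ ≤ ∑ y, (u y ^ 2 / 2 + v y ^ 2 / 2) :=
        sum_le_sum fun y _ ↦ by linarith [two_mul_le_add_sq (u y) (v y)]
    _ = _ := by rw [sum_add_distrib, ← sum_div, ← sum_div, ← hu, ← hv, add_halves]

end Moments

/-! ### Unbalancing -/

section Unbalancing

lemma mul_moment_combination_le_pow {x y h τ : ℝ} {p : ℕ} (r : ℕ) (hp : Even p) (hh : 0 ≤ h)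
    (hτ : τ ≤ 1) (hy : 0 ≤ y) (hxy : 1 + x - τ ≤ y) :
    (1 + h - τ) ^ r * (x ^ (p + 1) / 2 + h * x ^ p / 2 - 3 / 2 * h ^ (p + 1)) ≤
      y ^ (r + (p + 1)) := by
  have hbase : 0 ≤ 1 + h - τ := by linarith
  obtain hx | hx := le_or_gt h x
  · have hx0 : 0 ≤ x := hh.trans hx
    have hcomb : x ^ (p + 1) / 2 + h * x ^ p / 2 - 3 / 2 * h ^ (p + 1) ≤ x ^ (p + 1) := by
      have hmul : h * x ^ p ≤ x ^ (p + 1) := by rw [pow_succ']; gcongr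
      have hpow : 0 ≤ h ^ (p + 1) := by positivity
      linarith
    calc _ ≤ (1 + h - τ) ^ r * x ^ (p + 1) := by gcongr
      _ ≤ y ^ r * y ^ (p + 1) := by gcongr <;> linarith
      _ = _ := (pow_add ..).symm
  · have hcomb : x ^ p * (x + h) ≤ 2 * h ^ (p + 1) := by
      obtain hx' | hx' := le_or_gt x (-h)
      · exact (mul_nonpos_of_nonneg_of_nonpos (hp.pow_nonneg x) (by linarith)).trans
          (by positivity)
      · have habs : x ^ p ≤ h ^ p := by
          rw [← hp.pow_abs]
          exact pow_le_pow_left₀ (abs_nonneg _) (abs_le.2 ⟨hx'.le, hx.le⟩) _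
        calc x ^ p * (x + h) ≤ h ^ p * (h + h) := by gcongr; linarith
          _ = _ := by ring
    refine (mul_nonpos_of_nonneg_of_nonpos (by positivity) ?_).trans (by positivity)
    have hpow : 0 ≤ h ^ (p + 1) := by positivity
    have hexpand : x ^ p * (x + h) = x ^ (p + 1) + h * x ^ p := by ring
    linarith

lemma le_sum_pow_of_le_sum_pow {ι : Type*} {Q : Finset ι} {X Y : ι → ℝ} {p : ℕ} (r : ℕ) {ε τ : ℝ}
    (hp : Even p) (hp4 : 4 ≤ p) (hε : 0 ≤ ε) (hτ : τ ≤ 1) (hY : ∀ i ∈ Q, 0 ≤ Y i)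
    (hXY : ∀ i ∈ Q, 1 + X i - τ ≤ Y i) (hodd : 0 ≤ ∑ i ∈ Q, X i ^ (p + 1))
    (heven : #Q * ε ^ p ≤ ∑ i ∈ Q, X i ^ p) :
    (1 + ε / 2 - τ) ^ r * (#Q * ε ^ (p + 1) / 16) ≤ ∑ i ∈ Q, Y i ^ (r + (p + 1)) := by
  refine le_trans ?_ (sum_le_sum fun i hi ↦ mul_moment_combination_le_pow r hp
    (div_nonneg hε zero_le_two) hτ (hY i hi) (hXY i hi))
  rw [← mul_sum, sum_sub_distrib, sum_add_distrib, ← sum_div, ← sum_div, ← mul_sum, sum_const,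
    nsmul_eq_mul]
  have hsmall : (ε / 2) ^ (p + 1) ≤ ε ^ (p + 1) / 32 := by
    rw [div_pow, show (32 : ℝ) = 2 ^ 5 by norm_num]
    gcongr
    · norm_num
    · omega
  have hscaled : (#Q : ℝ) * (ε / 2) ^ (p + 1) ≤ #Q * (ε ^ (p + 1) / 32) := by gcongr
  have hmain : (ε / 2) * (#Q * ε ^ p) ≤ ε / 2 * ∑ i ∈ Q, X i ^ p := by gcongr
  have hpos : (0 : ℝ) ≤ #Q * ε ^ (p + 1) := by positivity
  have hbase : 0 ≤ 1 + ε / 2 - τ := by linarith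
  gcongr
  rw [show ε / 2 * (#Q * ε ^ p) = #Q * ε ^ (p + 1) / 2 by ring] at hmain
  linarith

end Unbalancing

/-! ### Sifting -/

section Sifting

variable {G : Type*} [DecidableEq G]

/-- The real-valued indicator function of a finite set. -/
def ind (A : Finset G) (x : G) : ℝ := if x ∈ A then 1 else 0

lemma ind_of_mem {A : Finset G} {x : G} (hx : x ∈ A) : ind A x = 1 := if_pos hx

lemma ind_of_notMem {A : Finset G} {x : G} (hx : x ∉ A) : ind A x = 0 := if_neg hx

lemma ind_nonneg (A : Finset G) (x : G) : 0 ≤ ind A x := by unfold ind; split_ifs <;> norm_num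

lemma ind_le_one (A : Finset G) (x : G) : ind A x ≤ 1 := by unfold ind; split_ifs <;> norm_num

lemma sum_ind [Fintype G] (A : Finset G) : ∑ x, ind A x = #A := by simp [ind]

lemma sum_ind_mul [Fintype G] (A : Finset G) (f : G → ℝ) : ∑ x, ind A x * f x = ∑ x ∈ A, f x := by
  simp [ind, sum_ite_mem]

variable [AddCommGroup G]

lemma prod_ind_add (A : Finset G) (b : G) {k : ℕ} (s : Fin k → G) :
    ∏ i, ind A (s i + b) = if ∀ i, s i + b ∈ A then 1 else 0 := by
  simp [ind, prod_boole]

/-- The part of `D` that all the translates `A - s i` have in common. -/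
def siftedSet (A D : Finset G) {k : ℕ} (s : Fin k → G) : Finset G := {b ∈ D | ∀ i, s i + b ∈ A}

variable [Fintype G]

lemma autocorr_ind_nonneg (A : Finset G) (u : G) : 0 ≤ autocorr (ind A) u :=
  sum_nonneg fun _ _ ↦ mul_nonneg (ind_nonneg _ _) (ind_nonneg _ _)

lemma sum_card_siftedSet (A D : Finset G) (k : ℕ) :
    ∑ s : Fin k → G, (#(siftedSet A D s) : ℝ) = #D * #A ^ k := by
  have hcard (s : Fin k → G) : (#(siftedSet A D s) : ℝ) = ∑ b ∈ D, ∏ i, ind A (s i + b) := by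
    simp [siftedSet, prod_ind_add]
  have htuples (b : G) : ∑ s : Fin k → G, ∏ i, ind A (s i + b) = #A ^ k := by
    rw [← Fintype.sum_pow fun x ↦ ind A (x + b), ← sum_ind]
    exact congr_arg (· ^ k) (Equiv.sum_comp (Equiv.addRight b) (ind A))
  simp_rw [hcard]
  rw [sum_comm]
  simp_rw [htuples, sum_const, nsmul_eq_mul]

lemma sum_sum_sum_siftedSet (A D : Finset G) (k : ℕ) (w : G → ℝ) :
    ∑ s : Fin k → G, ∑ a ∈ siftedSet A D s, ∑ a' ∈ siftedSet A D s, w (a - a') =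
      ∑ b ∈ D, ∑ b' ∈ D, w (b - b') * autocorr (ind A) (b - b') ^ k := by
  have hsplit (s : Fin k → G) : ∑ a ∈ siftedSet A D s, ∑ a' ∈ siftedSet A D s, w (a - a') =
      ∑ b ∈ D, ∑ b' ∈ D, w (b - b') * ∏ i, (ind A (s i + b) * ind A (s i + b')) := by
    simp only [siftedSet, sum_filter, prod_mul_distrib, prod_ind_add]
    refine sum_congr rfl fun b _ ↦ ?_
    split_ifs <;> simp
  simp_rw [hsplit, autocorr_sub, Fintype.sum_pow, mul_sum]
  rw [sum_comm]
  exact sum_congr rfl fun b _ ↦ sum_comm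

/- With `s` chosen uniformly at random, the pairs of `siftedSet A D s` with difference `u` are
weighted by `autocorr (ind A) u ^ q`, so most of the mass sits where the correlation is large. -/
lemma exists_sifted {A D S : Finset G} {c η δ : ℝ} {q : ℕ} (hc : 0 ≤ c) (hη : 0 ≤ η) (hδ : 0 < δ)
    (hS : ∀ u ∉ S, autocorr (ind A) u ≤ c)
    (hlarge : 2 * (#D ^ 2 * c ^ q) ≤ δ * ∑ b ∈ D, ∑ b' ∈ D, autocorr (ind A) (b - b') ^ q)
    (hdense : 2 * (η * #D ^ 2 * #A ^ q) < ∑ b ∈ D, ∑ b' ∈ D, autocorr (ind A) (b - b') ^ q) :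
    ∃ A' ⊆ D, A'.Nonempty ∧ η * #D ≤ #A' ∧
      (1 - δ) * #A' ^ 2 ≤ ∑ a ∈ A', ∑ a' ∈ A', ind S (a - a') := by
  set M := ∑ b ∈ D, ∑ b' ∈ D, autocorr (ind A) (b - b') ^ q with hM
  let pairs (s : Fin q → G) (w : G → ℝ) : ℝ :=
    ∑ a ∈ siftedSet A D s, ∑ a' ∈ siftedSet A D s, w (a - a')
  have hcard_sq (s : Fin q → G) : pairs s (fun _ ↦ 1) = (#(siftedSet A D s) : ℝ) ^ 2 := by
    simp [pairs, sq]
  have htotal : ∑ s, pairs s (fun _ ↦ 1) = M :=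
    (sum_sum_sum_siftedSet A D q fun _ ↦ 1).trans (by simp only [one_mul, hM])
  have hbad : ∑ s, pairs s (fun u ↦ 1 - ind S u) ≤ #D ^ 2 * c ^ q := by
    have hterm (u : G) : (1 - ind S u) * autocorr (ind A) u ^ q ≤ c ^ q := by
      by_cases hu : u ∈ S
      · simpa [ind_of_mem hu] using pow_nonneg hc q
      · simpa [ind_of_notMem hu] using pow_le_pow_left₀ (autocorr_ind_nonneg A u) (hS u hu) q
    calc _ = _ := sum_sum_sum_siftedSet A D q (fun u ↦ 1 - ind S u)
      _ ≤ ∑ _ ∈ D, ∑ _ ∈ D, c ^ q := sum_le_sum fun _ _ ↦ sum_le_sum fun _ _ ↦ hterm _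
      _ = _ := by simp [sq, mul_assoc]
  have hpos : ∑ _ : Fin q → G, (0 : ℝ) < ∑ s, (δ * pairs s (fun _ ↦ 1) -
      pairs s (fun u ↦ 1 - ind S u) - δ * η * #D * #(siftedSet A D s)) := by
    rw [sum_sub_distrib, sum_sub_distrib, ← mul_sum, ← mul_sum, htotal, sum_card_siftedSet,
      sum_const_zero]
    nlinarith
  obtain ⟨s, -, hs⟩ := exists_lt_of_sum_lt hpos
  have hbad_nonneg : 0 ≤ pairs s (fun u ↦ 1 - ind S u) :=
    sum_nonneg fun _ _ ↦ sum_nonneg fun _ _ ↦ sub_nonneg.2 (ind_le_one _ _)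
  have hbad_eq : pairs s (fun u ↦ 1 - ind S u) = #(siftedSet A D s) ^ 2 -
      ∑ a ∈ siftedSet A D s, ∑ a' ∈ siftedSet A D s, ind S (a - a') := by
    simp [pairs, sum_sub_distrib, sq]
  rw [hcard_sq] at hs
  have hne : (siftedSet A D s).Nonempty := by
    by_contra! hempty
    simp [hempty, pairs] at hs
  have hcard_pos : (0 : ℝ) < #(siftedSet A D s) := by exact_mod_cast hne.card_pos
  have hsize : 0 ≤ δ * η * #D * #(siftedSet A D s) := by positivity
  refine ⟨siftedSet A D s, filter_subset _ _, hne, ?_, by linarith⟩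
  have h : δ * #(siftedSet A D s) * (η * #D) ≤ δ * #(siftedSet A D s) * #(siftedSet A D s) := by
    linarith
  exact le_of_mul_le_mul_left h (by positivity)

end Sifting

/-! ### Concentration of sample means -/

section Hoeffding

variable {ι : Type*} {A : Finset ι} {Z : ι → ℝ}

lemma sum_exp_mul_le {t : ℝ} (hZ : ∀ a ∈ A, |Z a| ≤ 1) (hsum : ∑ a ∈ A, Z a = 0) (ht : |t| ≤ 1) :
    ∑ a ∈ A, Real.exp (t * Z a) ≤ #A * Real.exp (t ^ 2) := by
  have hpoint : ∀ a ∈ A, Real.exp (t * Z a) ≤ Real.exp (t ^ 2) + t * Z a := by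
    intro a ha
    have habs : |t * Z a| ≤ |t| := by
      rw [abs_mul]; exact mul_le_of_le_one_right (abs_nonneg _) (hZ a ha)
    have htaylor := (abs_le.1 (Real.abs_exp_sub_one_sub_id_le (habs.trans ht))).2
    linarith [sq_le_sq.2 habs, Real.add_one_le_exp (t ^ 2)]
  calc _ ≤ ∑ a ∈ A, (Real.exp (t ^ 2) + t * Z a) := sum_le_sum hpoint
    _ = _ := by rw [sum_add_distrib, ← mul_sum, hsum, sum_const, nsmul_eq_mul, mul_zero, add_zero]

lemma card_filter_lt_sum_le (hZ : ∀ a ∈ A, |Z a| ≤ 1) (hsum : ∑ a ∈ A, Z a = 0) (k : ℕ) {δ : ℝ}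
    (hδ : 0 ≤ δ) (hδ1 : δ ≤ 1) :
    (#{a ∈ Fintype.piFinset fun _ : Fin k ↦ A | k * δ < ∑ i, Z (a i)} : ℝ) ≤
      Real.exp (-(k * δ ^ 2 / 4)) * #A ^ k := by
  set P := Fintype.piFinset fun _ : Fin k ↦ A
  have hmarkov : #{a ∈ P | k * δ < ∑ i, Z (a i)} * Real.exp (k * δ ^ 2 / 2) ≤
      ∑ a ∈ P, Real.exp (δ / 2 * ∑ i, Z (a i)) := by
    rw [← nsmul_eq_mul, ← sum_const]
    refine (sum_le_sum fun a ha ↦ Real.exp_le_exp.2 ?_).trans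
      (sum_le_sum_of_subset_of_nonneg (filter_subset _ P) fun _ _ _ ↦ (Real.exp_pos _).le)
    calc k * δ ^ 2 / 2 = δ / 2 * (k * δ) := by ring
      _ ≤ δ / 2 * ∑ i, Z (a i) := by gcongr; exact (mem_filter.1 ha).2.le
  have hmgf : ∑ a ∈ P, Real.exp (δ / 2 * ∑ i, Z (a i)) ≤ #A ^ k * Real.exp (k * δ ^ 2 / 4) := by
    calc _ = (∑ a ∈ A, Real.exp (δ / 2 * Z a)) ^ k := by
          simp only [mul_sum, Real.exp_sum, sum_pow', P]
      _ ≤ (#A * Real.exp ((δ / 2) ^ 2)) ^ k := by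
        gcongr
        exact sum_exp_mul_le hZ hsum (abs_le.2 ⟨by linarith, by linarith⟩)
      _ = _ := by rw [mul_pow, ← Real.exp_nat_mul]; ring_nf
  have hexp : Real.exp (k * δ ^ 2 / 2) = Real.exp (k * δ ^ 2 / 4) * Real.exp (k * δ ^ 2 / 4) := by
    rw [← Real.exp_add]; ring_nf
  rw [Real.exp_neg, ← div_eq_inv_mul, le_div_iff₀ (Real.exp_pos _)]
  refine le_of_mul_le_mul_right ?_ (Real.exp_pos (k * δ ^ 2 / 4))
  rw [mul_assoc, ← hexp]
  exact hmarkov.trans hmgf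

lemma card_filter_lt_abs_sum_le (hZ : ∀ a ∈ A, |Z a| ≤ 1) (hsum : ∑ a ∈ A, Z a = 0) (k : ℕ) {δ : ℝ}
    (hδ : 0 ≤ δ) (hδ1 : δ ≤ 1) :
    (#{a ∈ Fintype.piFinset fun _ : Fin k ↦ A | k * δ < |∑ i, Z (a i)|} : ℝ) ≤
      2 * Real.exp (-(k * δ ^ 2 / 4)) * #A ^ k := by
  classical
  have hupper := card_filter_lt_sum_le hZ hsum k hδ hδ1
  have hlower := card_filter_lt_sum_le (Z := fun a ↦ -Z a) (by simpa using hZ) (by simp [hsum]) k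
    hδ hδ1
  simp_rw [lt_abs, filter_or]
  refine (Nat.cast_le.2 (card_union_le _ _)).trans ?_
  simp_rw [sum_neg_distrib] at hlower
  push_cast
  linarith

end Hoeffding

/-! ### Almost-periodicity -/

section AlmostPeriodicity

variable {G : Type*} [AddCommGroup G] [DecidableEq G]

/-- The density of `S` on the translate `x - A`. -/
noncomputable def localDensity (A S : Finset G) (x : G) : ℝ := (∑ a ∈ A, ind S (x - a)) / #A

/-- The approximation to `localDensity A S x` obtained by sampling the elements `c i` of `A`. -/
noncomputable def sampleMean (S : Finset G) {k : ℕ} (c : Fin k → G) (x : G) : ℝ :=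
  (∑ i, ind S (x - c i)) / k

/-- The points of `X` at which `h` is not within `δ` of the local density of `S` on `x - A`. -/
noncomputable def deviationSet (A S X : Finset G) (δ : ℝ) (h : G → ℝ) : Finset G :=
  {x ∈ X | δ < |h x - localDensity A S x|}

variable {A S X D : Finset G} {δ β K : ℝ}

lemma localDensity_nonneg (A S : Finset G) (x : G) : 0 ≤ localDensity A S x :=
  div_nonneg (sum_nonneg fun _ _ ↦ ind_nonneg _ _) (Nat.cast_nonneg _)

lemma localDensity_le_one (A S : Finset G) (x : G) : localDensity A S x ≤ 1 :=
  div_le_one_of_le₀ ((sum_le_sum fun _ _ ↦ ind_le_one _ _).trans_eq (by simp)) (Nat.cast_nonneg _)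

lemma sum_ind_add_le (A E : Finset G) (u : G) : ∑ x ∈ A, ind E (x + u) ≤ #E := by
  simp only [ind, sum_boole, Nat.cast_le]
  exact card_le_card_of_injOn (· + u) (fun x hx ↦ (mem_filter.1 hx).2) (add_left_injective u).injOn

lemma sampleMean_add (S : Finset G) {k : ℕ} (c : Fin k → G) (x t : G) :
    sampleMean S c (x + t) = sampleMean S (c · - t) x := by
  simp only [sampleMean, sub_sub_eq_add_sub]

lemma card_filter_lt_abs_sampleMean_sub_le (hA : A.Nonempty) {k : ℕ} (hk : k ≠ 0) (hδ : 0 ≤ δ)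
    (hδ1 : δ ≤ 1) (S : Finset G) (x : G) :
    (#{c ∈ Fintype.piFinset fun _ : Fin k ↦ A | δ < |sampleMean S c x - localDensity A S x|} : ℝ) ≤
      2 * Real.exp (-(k * δ ^ 2 / 4)) * #A ^ k := by
  have hA0 : (#A : ℝ) ≠ 0 := by exact_mod_cast hA.card_ne_zero
  have hk0 : (0 : ℝ) < k := by exact_mod_cast Nat.pos_of_ne_zero hk
  have hmean : ∑ a ∈ A, (ind S (x - a) - localDensity A S x) = 0 := by
    rw [sum_sub_distrib, sum_const, nsmul_eq_mul, localDensity, mul_div_cancel₀ _ hA0, sub_self]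
  have hbound : ∀ a ∈ A, |ind S (x - a) - localDensity A S x| ≤ 1 := fun a _ ↦
    abs_sub_le_of_nonneg_of_le (ind_nonneg _ _) (ind_le_one _ _) (localDensity_nonneg _ _ _)
      (localDensity_le_one _ _ _)
  have hscale (c : Fin k → G) : |∑ i, (ind S (x - c i) - localDensity A S x)| =
      k * |sampleMean S c x - localDensity A S x| := by
    conv_rhs => rw [← abs_of_pos hk0, ← abs_mul, mul_sub, sampleMean, mul_div_cancel₀ _ hk0.ne']
    simp
  simpa only [hscale, mul_lt_mul_iff_right₀ hk0] using
    card_filter_lt_abs_sum_le hbound hmean k hδ hδ1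

lemma card_pow_le_two_mul_card_filter_deviationSet (hA : A.Nonempty) {k : ℕ} (hk : k ≠ 0)
    (hδ : 0 ≤ δ) (hδ1 : δ ≤ 1) (hβ : 0 < β) (hXA : (#X : ℝ) ≤ K * #A)
    (hkβ : 4 * K * Real.exp (-(k * δ ^ 2 / 4)) ≤ β) (S : Finset G) :
    (#A : ℝ) ^ k ≤ 2 * #{c ∈ Fintype.piFinset fun _ : Fin k ↦ A |
      (#(deviationSet A S X δ (sampleMean S c)) : ℝ) ≤ β * #A} := by
  set P := Fintype.piFinset fun _ : Fin k ↦ A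
  set p := Real.exp (-(k * δ ^ 2 / 4))
  let bad (c : Fin k → G) : ℝ := #(deviationSet A S X δ (sampleMean S c))
  have hA0 : (0 : ℝ) < #A := by exact_mod_cast hA.card_pos
  have htotal : ∑ c ∈ P, bad c ≤ #X * (2 * p * #A ^ k) := by
    simp only [bad, deviationSet, card_filter, Nat.cast_sum]
    rw [sum_comm, ← nsmul_eq_mul, ← sum_const]
    refine sum_le_sum fun x _ ↦ ?_
    simpa using card_filter_lt_abs_sampleMean_sub_le hA hk hδ hδ1 S x
  have hmarkov : #{c ∈ P | ¬bad c ≤ β * #A} * (β * #A) ≤ ∑ c ∈ P, bad c := by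
    rw [← nsmul_eq_mul]
    refine (card_nsmul_le_sum _ bad _ fun c hc ↦ (not_le.1 (mem_filter.1 hc).2).le).trans
      (sum_le_sum_of_subset_of_nonneg (filter_subset _ P) fun _ _ _ ↦ Nat.cast_nonneg _)
  have hfew : 2 * (#{c ∈ P | ¬bad c ≤ β * #A} : ℝ) ≤ #A ^ k := by
    refine le_of_mul_le_mul_right ?_ (mul_pos hβ hA0)
    calc 2 * #{c ∈ P | ¬bad c ≤ β * #A} * (β * #A) ≤ 2 * (#X * (2 * p * #A ^ k)) := by linarith
      _ ≤ 2 * (K * #A * (2 * p * #A ^ k)) := by gcongr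
      _ = 4 * K * p * (#A * #A ^ k) := by ring
      _ ≤ β * (#A * #A ^ k) := by gcongr
      _ = _ := by ring
  have hsplit : (#{c ∈ P | bad c ≤ β * #A} : ℝ) + #{c ∈ P | ¬bad c ≤ β * #A} = #A ^ k := by
    have hP : #P = #A ^ k := by simp [P]
    exact_mod_cast (card_filter_add_card_filter_not _).trans hP
  linarith

lemma exists_card_le_mul_card_filter_sub_mem {k : ℕ} {P : Finset (Fin k → G)} (hA : A.Nonempty)
    (hD : D.Nonempty) (hXA : (#X : ℝ) ≤ K * #A) (hX : ∀ a ∈ A, ∀ t ∈ D, a + t ∈ X)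
    (hPA : P ⊆ Fintype.piFinset fun _ ↦ A) (hP : (#A : ℝ) ^ k ≤ 2 * #P) :
    ∃ c : Fin k → G, (#D : ℝ) ≤ 2 * K ^ k * #{t ∈ D | (c · - t) ∈ P} := by
  set Y := Fintype.piFinset fun _ : Fin k ↦ X
  obtain ⟨a, ha⟩ := hA
  obtain ⟨t₀, ht₀⟩ := hD
  have hYne : Y.Nonempty := ⟨fun _ ↦ a + t₀, Fintype.mem_piFinset.2 fun _ ↦ hX a ha t₀ ht₀⟩
  have hA0 : (0 : ℝ) < #A := by exact_mod_cast card_pos.2 ⟨a, ha⟩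
  have hK : 0 ≤ K := nonneg_of_mul_nonneg_left ((Nat.cast_nonneg _).trans hXA) hA0
  have hfiber : ∀ t ∈ D, #P ≤ #{c ∈ Y | (c · - t) ∈ P} := by
    refine fun t ht ↦ card_le_card_of_injOn (fun c i ↦ c i + t) (fun c hc ↦ ?_) fun c _ c' _ h ↦ ?_
    · rw [mem_coe] at hc
      refine mem_filter.2 ⟨Fintype.mem_piFinset.2 fun i ↦ ?_, by simpa using hc⟩
      exact hX _ (Fintype.mem_piFinset.1 (hPA hc) i) _ ht
    · exact funext fun i ↦ add_right_cancel (congr_fun h i)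
  have hcount : #D * #P ≤ ∑ c ∈ Y, #{t ∈ D | (c · - t) ∈ P} := by
    simp only [card_filter]
    rw [sum_comm, ← smul_eq_mul]
    exact card_nsmul_le_sum _ _ _ fun t ht ↦ by simpa using hfiber t ht
  obtain ⟨c, -, hc⟩ := exists_le_of_sum_le hYne (f := fun _ ↦ (#D : ℝ))
    (g := fun c ↦ 2 * K ^ k * #{t ∈ D | (c · - t) ∈ P}) <| by
      rw [sum_const, nsmul_eq_mul, ← mul_sum]
      calc (#Y : ℝ) * #D ≤ (K * #A) ^ k * #D := by
            simp only [Y, Fintype.card_piFinset_const, Nat.cast_pow]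
            gcongr
        _ = K ^ k * #D * #A ^ k := by ring
        _ ≤ K ^ k * #D * (2 * #P) := by gcongr
        _ = 2 * K ^ k * (#D * #P) := by ring
        _ ≤ _ := by gcongr; exact_mod_cast hcount
  exact ⟨c, hc⟩

/- Croot–Sisask: if two tuples `c - t` and `c - t'` both sample the density well, then the density
is nearly invariant under `t - t'`, because both are approximated by translates of
`sampleMean S c`. -/
lemma exists_almost_periods {k : ℕ} (hA : A.Nonempty) (hD : D.Nonempty) (hk : k ≠ 0) (hδ : 0 ≤ δ)
    (hδ1 : δ ≤ 1) (hβ : 0 < β) (hXA : (#X : ℝ) ≤ K * #A)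
    (hkβ : 4 * K * Real.exp (-(k * δ ^ 2 / 4)) ≤ β) (hX : ∀ a ∈ A, ∀ t ∈ D, a + t ∈ X)
    (S : Finset G) :
    ∃ T ⊆ D, (#D : ℝ) ≤ 2 * K ^ k * #T ∧
      ∃ h : G → ℝ, ∀ t ∈ T, (#(deviationSet A S X δ fun x ↦ h (x + t)) : ℝ) ≤ β * #A := by
  obtain ⟨c, hc⟩ := exists_card_le_mul_card_filter_sub_mem hA hD hXA hX (filter_subset _ _)
    (card_pow_le_two_mul_card_filter_deviationSet hA hk hδ hδ1 hβ hXA hkβ S)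
  refine ⟨_, filter_subset _ _, hc, sampleMean S c, fun t ht ↦ ?_⟩
  simpa only [sampleMean_add] using (mem_filter.1 (mem_filter.1 ht).2).2

variable {h : G → ℝ}

lemma sum_localDensity_sub_le_of_deviationSet {t t' u : G} (hδ : 0 ≤ δ)
    (ht : (#(deviationSet A S X δ fun x ↦ h (x + t)) : ℝ) ≤ β * #A)
    (ht' : (#(deviationSet A S X δ fun x ↦ h (x + t')) : ℝ) ≤ β * #A)
    (hu : ∀ x ∈ A, x + u ∈ X) (hu' : ∀ x ∈ A, x + (u + (t - t')) ∈ X) :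
    ∑ x ∈ A, localDensity A S (x + u) - (2 * δ + 2 * β) * #A ≤
      ∑ x ∈ A, localDensity A S (x + (u + (t - t'))) := by
  set E := deviationSet A S X δ fun x ↦ h (x + t) with hE
  set E' := deviationSet A S X δ fun x ↦ h (x + t') with hE'
  have hpoint : ∀ x ∈ A, localDensity A S (x + u) - 2 * δ - ind E (x + u) -
      ind E' (x + (u + (t - t'))) ≤ localDensity A S (x + (u + (t - t'))) := by
    intro x hx
    have hle := localDensity_le_one A S (x + u)
    have hnonneg := localDensity_nonneg A S (x + (u + (t - t')))
    by_cases hxE : x + u ∈ E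
    · linarith [ind_of_mem hxE, ind_nonneg E' (x + (u + (t - t')))]
    by_cases hxE' : x + (u + (t - t')) ∈ E'
    · linarith [ind_of_mem hxE', ind_nonneg E (x + u)]
    rw [ind_of_notMem hxE, ind_of_notMem hxE']
    rw [hE, deviationSet, mem_filter, not_and, not_lt] at hxE
    rw [hE', deviationSet, mem_filter, not_and, not_lt,
      show x + (u + (t - t')) + t' = x + u + t by abel] at hxE'
    linarith [(abs_le.1 (hxE (hu x hx))).1, (abs_le.1 (hxE' (hu' x hx))).2]
  have hsum := sum_le_sum hpoint
  rw [sum_sub_distrib, sum_sub_distrib, sum_sub_distrib, sum_const, nsmul_eq_mul] at hsum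
  linarith [sum_ind_add_le A E u, sum_ind_add_le A E' (u + (t - t'))]

lemma sum_localDensity_sub_le_of_forall_deviationSet {T : Finset G} (hδ : 0 ≤ δ)
    (hT : ∀ t ∈ T, (#(deviationSet A S X δ fun x ↦ h (x + t)) : ℝ) ≤ β * #A) {m : ℕ}
    (hX : ∀ j ≤ m, ∀ t t' : Fin j → G, (∀ i, t i ∈ T) → (∀ i, t' i ∈ T) → ∀ x ∈ A,
      x + ∑ i, (t i - t' i) ∈ X) {t t' : Fin m → G} (ht : ∀ i, t i ∈ T) (ht' : ∀ i, t' i ∈ T) :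
    ∑ x ∈ A, localDensity A S x - m * (2 * δ + 2 * β) * #A ≤
      ∑ x ∈ A, localDensity A S (x + ∑ i, (t i - t' i)) := by
  induction m with
  | zero => simp
  | succ m ih =>
    have hprev := ih (fun j hj ↦ hX j (hj.trans m.le_succ)) (fun i ↦ ht i.castSucc)
      fun i ↦ ht' i.castSucc
    have hstep := sum_localDensity_sub_le_of_deviationSet hδ (hT _ (ht (Fin.last m)))
      (hT _ (ht' (Fin.last m)))
      (hX m m.le_succ _ _ (fun i ↦ ht i.castSucc) fun i ↦ ht' i.castSucc)
      (by simpa only [Fin.sum_univ_castSucc] using hX (m + 1) le_rfl t t' ht ht')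
    rw [Fin.sum_univ_castSucc]
    push_cast
    linarith

end AlmostPeriodicity

/-! ### Dissociated sets of characters and Chang's theorem -/

section Dissociated

variable {G : Type*} [AddCommGroup G]

/-- The combination `∑ l ∈ Λ, ε l • l` of characters with coefficients in `{-1, 0, 1}`. -/
def signedSum (ε : AddChar G ℂ → SignType) (Λ : Finset (AddChar G ℂ)) : AddChar G ℂ :=
  ∑ l ∈ Λ, (ε l : ℤ) • l

/-- No nontrivial `{-1, 0, 1}`-combination of `Λ` lies in `P`; ordinary dissociativity is the case
`P = {0}`. -/
def DissociatedModulo (P : Set (AddChar G ℂ)) (Λ : Finset (AddChar G ℂ)) : Prop :=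
  ∀ ε : AddChar G ℂ → SignType, (∃ l ∈ Λ, ε l ≠ 0) → signedSum ε Λ ∉ P

/-- The Riesz product of `Λ` with coefficients `a`; a factor
`1 + 2 * Re (a l * l x)` is `1 + a l * l x + conj (a l) * (-l) x`. -/
noncomputable def rieszProduct (a : AddChar G ℂ → ℂ) (Λ : Finset (AddChar G ℂ)) (x : G) : ℝ :=
  ∏ l ∈ Λ, (1 + 2 * (a l * l x).re)

/-- The characters whose sum over `T` has at least half of its maximal size. -/
def largeSpectrum (T : Finset G) : Set (AddChar G ℂ) := {γ | (#T : ℝ) ≤ 2 * ‖∑ x ∈ T, γ x‖}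

variable {Λ Λ' : Finset (AddChar G ℂ)} {l ψ : AddChar G ℂ} {P : Set (AddChar G ℂ)}

lemma apply_sum_eq_prod {ι : Type*} (s : Finset ι) (u : ι → G) (ψ : AddChar G ℂ) :
    ψ (∑ i ∈ s, u i) = ∏ i ∈ s, ψ (u i) := by
  classical
  induction s using Finset.induction_on with
  | empty => simp
  | insert a s ha ih => rw [sum_insert ha, prod_insert ha, AddChar.map_add_eq_mul, ih]

lemma mem_largeSpectrum {T : Finset G} :
    ψ ∈ largeSpectrum T ↔ (#T : ℝ) ≤ 2 * ‖∑ x ∈ T, ψ x‖ := Iff.rfl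

lemma zero_mem_largeSpectrum (T : Finset G) : 0 ∈ largeSpectrum T := by
  simp only [mem_largeSpectrum, AddChar.zero_apply, sum_const, nsmul_eq_mul, mul_one,
    Complex.norm_natCast]
  linarith [(#T).cast_nonneg (α := ℝ)]

lemma signedSum_insert (hl : l ∉ Λ) (ε : AddChar G ℂ → SignType) :
    signedSum ε (insert l Λ) = (ε l : ℤ) • l + signedSum ε Λ :=
  sum_insert hl

lemma signedSum_update_insert (hl : l ∉ Λ) (ε : AddChar G ℂ → SignType) (e : SignType) :
    signedSum (Function.update ε l e) (insert l Λ) = (e : ℤ) • l + signedSum ε Λ := by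
  rw [signedSum_insert hl, Function.update_self]
  congr 1
  exact sum_congr rfl fun l' hl' ↦ by rw [Function.update_of_ne (ne_of_mem_of_not_mem hl' hl)]

lemma DissociatedModulo.subset (h : DissociatedModulo P Λ) (hsub : Λ' ⊆ Λ) :
    DissociatedModulo P Λ' := by
  rintro ε ⟨l, hl, hne⟩
  have hsum : signedSum (fun l ↦ if l ∈ Λ' then ε l else 0) Λ = signedSum ε Λ' := by
    rw [signedSum, ← sum_subset hsub fun l _ hl ↦ by simp [hl]]
    exact sum_congr rfl fun l hl ↦ by rw [if_pos hl]
  rw [← hsum]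
  exact h _ ⟨l, hsub hl, by rwa [if_pos hl]⟩

lemma sum_apply_add_sum (B V : Finset G) (n : ℕ) (ψ : AddChar G ℂ) :
    ∑ p ∈ Fintype.piFinset (fun _ : Fin n ↦ V) ×ˢ B, ψ (p.2 + ∑ i, p.1 i) =
      (∑ x ∈ B, ψ x) * (∑ x ∈ V, ψ x) ^ n := by
  rw [sum_product_right, sum_pow', sum_mul_sum]
  refine sum_congr rfl fun x _ ↦ sum_congr rfl fun u _ ↦ ?_
  rw [AddChar.map_add_eq_mul, apply_sum_eq_prod]

variable [Finite G]

lemma norm_sum_apply_le_card (T : Finset G) (γ : AddChar G ℂ) : ‖∑ x ∈ T, γ x‖ ≤ #T := by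
  simpa using norm_sum_le_of_le T fun x _ ↦ (AddChar.norm_apply γ x).le

lemma norm_one_sub_add_apply_le (χ χ' : AddChar G ℂ) (v : G) :
    ‖1 - (χ + χ') v‖ ≤ ‖1 - χ v‖ + ‖1 - χ' v‖ := by
  calc ‖1 - (χ + χ') v‖ = ‖(1 - χ v) + χ v * (1 - χ' v)‖ := by rw [AddChar.add_apply]; ring_nf
    _ ≤ ‖1 - χ v‖ + ‖χ v * (1 - χ' v)‖ := norm_add_le _ _
    _ = _ := by rw [norm_mul, AddChar.norm_apply, one_mul]

lemma norm_one_sub_neg_apply (χ : AddChar G ℂ) (v : G) : ‖1 - (-χ) v‖ = ‖1 - χ v‖ := by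
  rw [AddChar.neg_apply, norm_one_sub_apply_neg]

lemma norm_one_sub_zsmul_apply (χ : AddChar G ℂ) (v : G) {e : SignType} (he : e ≠ 0) :
    ‖1 - ((e : ℤ) • χ) v‖ = ‖1 - χ v‖ := by
  rcases SignType.trichotomy e with rfl | rfl | rfl
  · rw [SignType.coe_neg_one, neg_zsmul, one_zsmul, norm_one_sub_neg_apply]
  · exact absurd rfl he
  · rw [SignType.coe_one, one_zsmul]

lemma norm_one_sub_signedSum_apply_le (ε : AddChar G ℂ → SignType) (Λ : Finset (AddChar G ℂ))
    (v : G) : ‖1 - signedSum ε Λ v‖ ≤ ∑ l ∈ Λ, ‖1 - l v‖ := by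
  induction Λ using Finset.induction_on with
  | empty => simp [signedSum]
  | insert l Λ hl ih =>
    have hterm : ‖1 - ((ε l : ℤ) • l) v‖ ≤ ‖1 - l v‖ := by
      rcases eq_or_ne (ε l) 0 with h0 | h0
      · simp [h0]
      · exact (norm_one_sub_zsmul_apply l v h0).le
    rw [signedSum_insert hl, sum_insert hl]
    exact (norm_one_sub_add_apply_le _ _ _).trans (add_le_add hterm ih)

lemma mul_rieszProduct_insert (a : AddChar G ℂ → ℂ) (hl : l ∉ Λ) (ψ : AddChar G ℂ) (x : G) :
    ψ x * rieszProduct a (insert l Λ) x = ψ x * rieszProduct a Λ x +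
      a l * ((ψ + l) x * rieszProduct a Λ x) +
      starRingEnd ℂ (a l) * ((ψ + -l) x * rieszProduct a Λ x) := by
  have hfactor : ((1 + 2 * (a l * l x).re : ℝ) : ℂ) =
      1 + a l * l x + starRingEnd ℂ (a l) * (-l) x := by
    push_cast
    rw [Complex.re_eq_add_conj, AddChar.neg_apply, AddChar.map_neg_eq_conj, map_mul]
    ring
  rw [rieszProduct, prod_insert hl, Complex.ofReal_mul, hfactor, ← rieszProduct,
    AddChar.add_apply, AddChar.add_apply]
  ring

lemma norm_sum_mul_rieszProduct_sub_le {ι : Type*} (s : Finset ι) (z : ι → G)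
    {a : AddChar G ℂ → ℂ} (ha : ∀ l, ‖a l‖ ≤ 1 / 2) {M : ℝ}
    (hM : ∀ ε, (∃ l ∈ Λ, ε l ≠ 0) → ‖∑ i ∈ s, (ψ + signedSum ε Λ) (z i)‖ ≤ M) :
    ‖∑ i ∈ s, ψ (z i) * rieszProduct a Λ (z i) - ∑ i ∈ s, ψ (z i)‖ ≤ (2 ^ #Λ - 1) * M := by
  induction Λ using Finset.induction_on generalizing ψ with
  | empty => simp [rieszProduct]
  | insert l Λ hl ih =>
    set F : AddChar G ℂ → ℂ := fun ψ ↦ ∑ i ∈ s, ψ (z i) * rieszProduct a Λ (z i) with hF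
    have hzero : ‖F ψ - ∑ i ∈ s, ψ (z i)‖ ≤ (2 ^ #Λ - 1) * M := by
      refine ih fun ε ⟨l', hl', hne⟩ ↦ ?_
      simpa [signedSum_update_insert hl] using hM (Function.update ε l 0)
        ⟨l', mem_insert_of_mem hl', by rwa [Function.update_of_ne (ne_of_mem_of_not_mem hl' hl)]⟩
    have hshift (e : SignType) (he : e ≠ 0) : ‖F (ψ + (e : ℤ) • l)‖ ≤ 2 ^ #Λ * M := by
      have hbound (ε : AddChar G ℂ → SignType) :
          ‖∑ i ∈ s, (ψ + (e : ℤ) • l + signedSum ε Λ) (z i)‖ ≤ M := by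
        rw [add_assoc, ← signedSum_update_insert hl]
        exact hM _ ⟨l, mem_insert_self _ _, by rwa [Function.update_self]⟩
      have htriv : ‖∑ i ∈ s, (ψ + (e : ℤ) • l) (z i)‖ ≤ M := by
        simpa [signedSum] using hbound 0
      linarith [ih fun ε _ ↦ hbound ε, norm_sub_norm_le (F (ψ + (e : ℤ) • l))
        (∑ i ∈ s, (ψ + (e : ℤ) • l) (z i))]
    have hpos := hshift 1 (by decide)
    have hneg := hshift (-1) (by decide)
    rw [SignType.coe_one, one_zsmul] at hpos
    rw [SignType.coe_neg_one, neg_zsmul, one_zsmul] at hneg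
    have hsplit : ∑ i ∈ s, ψ (z i) * rieszProduct a (insert l Λ) (z i) - ∑ i ∈ s, ψ (z i) =
        (F ψ - ∑ i ∈ s, ψ (z i)) + a l * F (ψ + l) + starRingEnd ℂ (a l) * F (ψ + -l) := by
      simp only [mul_rieszProduct_insert a hl, sum_add_distrib, ← mul_sum, hF]
      ring
    rw [hsplit, card_insert_of_notMem hl, pow_succ]
    refine norm_add₃_le.trans ?_
    rw [norm_mul, norm_mul, RCLike.norm_conj]
    linarith [mul_le_mul (ha l) hpos (norm_nonneg _) (by norm_num),
      mul_le_mul (ha l) hneg (norm_nonneg _) (by norm_num)]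

lemma rieszProduct_nonneg {a : AddChar G ℂ → ℂ} (ha : ∀ l, ‖a l‖ ≤ 1 / 2)
    (Λ : Finset (AddChar G ℂ)) (x : G) : 0 ≤ rieszProduct a Λ x := by
  refine prod_nonneg fun l _ ↦ ?_
  have hre := (abs_le.1 (Complex.abs_re_le_norm (a l * l x))).1
  rw [norm_mul, AddChar.norm_apply, mul_one] at hre
  linarith [ha l]

lemma DissociatedModulo.sum_rieszProduct_add_sum_le {a : AddChar G ℂ → ℂ}
    (ha : ∀ l, ‖a l‖ ≤ 1 / 2) {V : Finset G} (hΛ : DissociatedModulo (largeSpectrum V) Λ)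
    (B : Finset G) :
    ∑ p ∈ Fintype.piFinset (fun _ : Fin #Λ ↦ V) ×ˢ B, rieszProduct a Λ (p.2 + ∑ i, p.1 i) ≤
      2 * #B * #V ^ #Λ := by
  have hsmall (ε : AddChar G ℂ → SignType) (hε : ∃ l ∈ Λ, ε l ≠ 0) :
      ‖∑ p ∈ Fintype.piFinset (fun _ : Fin #Λ ↦ V) ×ˢ B,
        (0 + signedSum ε Λ) (p.2 + ∑ i, p.1 i)‖ ≤ #B * (#V / 2) ^ #Λ := by
    have hV : ‖∑ x ∈ V, signedSum ε Λ x‖ ≤ #V / 2 := by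
      have hlt := not_le.1 (mt mem_largeSpectrum.2 (hΛ ε hε))
      linarith
    rw [zero_add, sum_apply_add_sum, norm_mul, norm_pow]
    gcongr
    exact norm_sum_apply_le_card B _
  have hriesz := norm_sum_mul_rieszProduct_sub_le _ _ ha hsmall
  have hreal : ∑ p ∈ Fintype.piFinset (fun _ : Fin #Λ ↦ V) ×ˢ B,
      rieszProduct a Λ (p.2 + ∑ i, p.1 i) - #V ^ #Λ * #B ≤
        (2 ^ #Λ - 1) * (#B * (#V / 2) ^ #Λ) := by
    refine (le_abs_self _).trans (le_of_eq_of_le ?_ hriesz)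
    rw [← Real.norm_eq_abs, ← Complex.norm_real]
    simp
  have hhalf : (2 ^ #Λ - 1 : ℝ) * (#B * (#V / 2) ^ #Λ) ≤ #B * #V ^ #Λ := by
    calc (2 ^ #Λ - 1 : ℝ) * (#B * (#V / 2) ^ #Λ) ≤ 2 ^ #Λ * (#B * (#V / 2) ^ #Λ) := by
          gcongr; linarith
      _ = #B * #V ^ #Λ := by rw [div_pow]; field_simp
  linarith

/- Averaging the Riesz product over the translates by `#Λ` elements of `V` kills its nonconstant
terms, because each of them is outside the large spectrum of `V`. -/
lemma DissociatedModulo.sum_rieszProduct_le {a : AddChar G ℂ → ℂ}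
    (ha : ∀ l, ‖a l‖ ≤ 1 / 2) {V B B' : Finset G} (hΛ : DissociatedModulo (largeSpectrum V) Λ)
    (hV : V.Nonempty)
    (hB : ∀ u : Fin #Λ → G, (∀ i, u i ∈ V) → ∀ x ∈ B, x - ∑ i, u i ∈ B') :
    ∑ x ∈ B, rieszProduct a Λ x ≤ 2 * #B' := by
  classical
  have hVpos : (0 : ℝ) < #V ^ #Λ := by have := hV.card_pos; positivity
  refine le_of_mul_le_mul_left ?_ hVpos
  calc (#V : ℝ) ^ #Λ * ∑ x ∈ B, rieszProduct a Λ x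
      = ∑ _u ∈ Fintype.piFinset (fun _ : Fin #Λ ↦ V), ∑ x ∈ B, rieszProduct a Λ x := by
        simp
    _ ≤ ∑ u ∈ Fintype.piFinset (fun _ : Fin #Λ ↦ V),
          ∑ x ∈ B', rieszProduct a Λ (x + ∑ i, u i) := by
        refine sum_le_sum fun u hu ↦ ?_
        have himage : B.image (fun x ↦ x - ∑ i, u i) ⊆ B' :=
          image_subset_iff.2 (hB u (Fintype.mem_piFinset.1 hu))
        refine le_of_eq_of_le ?_ (sum_le_sum_of_subset_of_nonneg himage
          fun x _ _ ↦ rieszProduct_nonneg ha Λ _)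
        rw [sum_image sub_left_injective.injOn]
        simp only [sub_add_cancel]
    _ = ∑ p ∈ Fintype.piFinset (fun _ : Fin #Λ ↦ V) ×ˢ B',
          rieszProduct a Λ (p.2 + ∑ i, p.1 i) := by rw [sum_product]
    _ ≤ 2 * #B' * #V ^ #Λ := hΛ.sum_rieszProduct_add_sum_le ha B'
    _ = _ := by ring

end Dissociated

section Chang

lemma exp_half_le {y : ℝ} (hy : |y| ≤ 1) :
    Real.exp (y / 2) ≤ Real.exp (1 / 8) * (1 + Real.tanh (1 / 2) * y) := by
  obtain ⟨hy1, hy2⟩ := abs_le.1 hy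
  have hconvex := convexOn_exp.2 (Set.mem_univ (1 / 2 : ℝ)) (Set.mem_univ (-(1 / 2) : ℝ))
    (by linarith : 0 ≤ (1 + y) / 2) (by linarith : 0 ≤ (1 - y) / 2) (by ring)
  simp only [smul_eq_mul] at hconvex
  have hcosh : 0 < Real.cosh (1 / 2) := Real.cosh_pos _
  have htanh : Real.cosh (1 / 2) * Real.tanh (1 / 2) = Real.sinh (1 / 2) := by
    rw [Real.tanh_eq_sinh_div_cosh]; field_simp
  have hchord : Real.exp (y / 2) ≤ Real.cosh (1 / 2) * (1 + Real.tanh (1 / 2) * y) := by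
    rw [mul_add, ← mul_assoc, htanh, Real.cosh_eq, Real.sinh_eq]
    rw [show (1 + y) / 2 * (1 / 2) + (1 - y) / 2 * -(1 / 2) = y / 2 by ring] at hconvex
    linarith
  have hfactor : 0 < 1 + Real.tanh (1 / 2) * y :=
    pos_of_mul_pos_right ((Real.exp_pos _).trans_le hchord) hcosh.le
  refine hchord.trans (mul_le_mul_of_nonneg_right ?_ hfactor.le)
  exact (Real.cosh_le_exp_half_sq _).trans (Real.exp_le_exp.2 (by norm_num))

lemma card_mul_exp_le_sum_exp {ι : Type*} {T : Finset ι} {f : ι → ℝ} {t : ℝ}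
    (h : #T * t ≤ ∑ x ∈ T, f x) : #T * Real.exp t ≤ ∑ x ∈ T, Real.exp (f x) := by
  have htangent (x : ι) : Real.exp t * (1 + (f x - t)) ≤ Real.exp (f x) := by
    calc Real.exp t * (1 + (f x - t)) ≤ Real.exp t * Real.exp (f x - t) := by
          gcongr; linarith [Real.add_one_le_exp (f x - t)]
      _ = _ := by rw [← Real.exp_add, add_sub_cancel]
  refine le_trans ?_ (sum_le_sum fun x _ ↦ htangent x)
  rw [← mul_sum, mul_comm, sum_add_distrib, sum_sub_distrib]
  simp only [sum_const, nsmul_eq_mul, mul_one]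
  gcongr
  linarith

variable {G : Type*} [AddCommGroup G] [Finite G] {Λ : Finset (AddChar G ℂ)} {T V B B' : Finset G}

lemma exists_coeff_exp_le_rieszProduct (Λ : Finset (AddChar G ℂ)) (T : Finset G) :
    ∃ a : AddChar G ℂ → ℂ, (∀ l, ‖a l‖ ≤ 1 / 2) ∧ ∃ y : AddChar G ℂ → G → ℝ,
      (∀ l, ∑ x ∈ T, y l x = ‖∑ x ∈ T, l x‖) ∧
      ∀ x, Real.exp (∑ l ∈ Λ, y l x / 2) ≤ Real.exp (#Λ / 8) * rieszProduct a Λ x := by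
  choose c hc hphase using fun l : AddChar G ℂ ↦ Complex.exists_norm_eq_mul_self (∑ x ∈ T, l x)
  have htanh0 : 0 ≤ Real.tanh (1 / 2) := by
    rw [Real.tanh_eq_sinh_div_cosh]
    exact div_nonneg (Real.sinh_nonneg_iff.2 (by norm_num)) (Real.cosh_pos _).le
  refine ⟨fun l ↦ (Real.tanh (1 / 2) / 2 : ℝ) * c l, fun l ↦ ?_, fun l x ↦ (c l * l x).re,
    fun l ↦ ?_, fun x ↦ ?_⟩
  · rw [norm_mul, hc, mul_one, Complex.norm_real, Real.norm_of_nonneg (by positivity)]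
    linarith [Real.tanh_lt_one (1 / 2)]
  · rw [← Complex.re_sum, ← mul_sum, ← hphase, Complex.ofReal_re]
  · have hle (l : AddChar G ℂ) : |(c l * l x).re| ≤ 1 := by
      simpa [hc] using Complex.abs_re_le_norm (c l * l x)
    calc Real.exp (∑ l ∈ Λ, (c l * l x).re / 2)
        ≤ ∏ l ∈ Λ, (Real.exp (1 / 8) * (1 + Real.tanh (1 / 2) * (c l * l x).re)) := by
          rw [Real.exp_sum]
          exact prod_le_prod (fun _ _ ↦ (Real.exp_pos _).le) fun l _ ↦ exp_half_le (hle l)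
      _ = Real.exp (#Λ / 8) * rieszProduct _ Λ x := by
          rw [prod_mul_distrib, prod_const, ← Real.exp_nat_mul, mul_one_div, rieszProduct]
          congr 1
          refine prod_congr rfl fun l _ ↦ ?_
          rw [mul_assoc, Complex.re_ofReal_mul]
          ring

lemma DissociatedModulo.card_mul_exp_le (hΛ : DissociatedModulo (largeSpectrum V) Λ)
    (hspec : ∀ l ∈ Λ, l ∈ largeSpectrum T) (hV : V.Nonempty) (hT : T ⊆ B)
    (hB : ∀ u : Fin #Λ → G, (∀ i, u i ∈ V) → ∀ x ∈ B, x - ∑ i, u i ∈ B') :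
    #T * Real.exp (#Λ / 8) ≤ 2 * #B' := by
  obtain ⟨a, ha, y, hsum, hexp⟩ := exists_coeff_exp_le_rieszProduct Λ T
  have hmean : #T * (#Λ / 4 : ℝ) ≤ ∑ x ∈ T, ∑ l ∈ Λ, y l x / 2 := by
    have hterm : ∀ l ∈ Λ, (#T : ℝ) / 4 ≤ ∑ x ∈ T, y l x / 2 := fun l hl ↦ by
      have hlarge : (#T : ℝ) ≤ 2 * ‖∑ x ∈ T, l x‖ := hspec l hl
      rw [← sum_div, hsum]
      linarith
    rw [sum_comm]
    refine le_trans (le_of_eq ?_) (sum_le_sum hterm)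
    rw [sum_const, nsmul_eq_mul]
    ring
  refine le_of_mul_le_mul_left ?_ (Real.exp_pos (#Λ / 8))
  calc Real.exp (#Λ / 8) * (#T * Real.exp (#Λ / 8)) = #T * Real.exp (#Λ / 4) := by
        rw [mul_left_comm, ← Real.exp_add]; ring_nf
    _ ≤ ∑ x ∈ T, Real.exp (∑ l ∈ Λ, y l x / 2) := card_mul_exp_le_sum_exp hmean
    _ ≤ ∑ x ∈ B, Real.exp (#Λ / 8) * rieszProduct a Λ x :=
        (sum_le_sum fun x _ ↦ hexp x).trans (sum_le_sum_of_subset_of_nonneg hT fun x _ _ ↦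
          mul_nonneg (Real.exp_pos _).le (rieszProduct_nonneg ha Λ x))
    _ ≤ Real.exp (#Λ / 8) * (2 * #B') := by
        rw [← mul_sum]
        gcongr
        exact hΛ.sum_rieszProduct_le ha hV hB

lemma DissociatedModulo.exists_mem_norm_one_sub_le {P : Set (AddChar G ℂ)} {γ : AddChar G ℂ}
    (hΛ : DissociatedModulo P Λ) (hγ : γ ∉ Λ) (hins : ¬ DissociatedModulo P (insert γ Λ)) :
    ∃ ψ ∈ P, ∀ v, ‖1 - γ v‖ ≤ ‖1 - ψ v‖ + ∑ l ∈ Λ, ‖1 - l v‖ := by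
  simp only [DissociatedModulo, not_forall, not_not] at hins
  obtain ⟨ε, ⟨l, hl, hne⟩, hP⟩ := hins
  rw [signedSum_insert hγ] at hP
  have hεγ : ε γ ≠ 0 := by
    intro h0
    rw [h0, SignType.coe_zero, zero_zsmul, zero_add] at hP
    exact hΛ ε ⟨l, mem_of_mem_insert_of_ne hl fun h ↦ hne (h ▸ h0), hne⟩ hP
  refine ⟨_, hP, fun v ↦ ?_⟩
  have htriangle := norm_one_sub_add_apply_le ((ε γ : ℤ) • γ + signedSum ε Λ) (-signedSum ε Λ) v
  rw [add_neg_cancel_right, norm_one_sub_neg_apply, norm_one_sub_zsmul_apply γ v hεγ] at htriangle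
  exact htriangle.trans (by gcongr; exact norm_one_sub_signedSum_apply_le ε Λ v)

theorem exists_finset_control_largeSpectrum {n : ℕ} (hV : V.Nonempty) (hT : T ⊆ B)
    (hB : ∀ u : Fin n → G, (∀ i, u i ∈ V) → ∀ x ∈ B, x - ∑ i, u i ∈ B')
    (hn : 2 * (#B' : ℝ) < #T * Real.exp (n / 8)) :
    ∃ Λ : Finset (AddChar G ℂ), #Λ ≤ n ∧ ∀ γ ∈ largeSpectrum T, ∃ ψ ∈ largeSpectrum V,
      ∀ v, ‖1 - γ v‖ ≤ ‖1 - ψ v‖ + ∑ l ∈ Λ, ‖1 - l v‖ := by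
  obtain ⟨Λ, hΛmax⟩ := (Set.toFinite {Λ : Finset (AddChar G ℂ) |
    DissociatedModulo (largeSpectrum V) Λ ∧ ∀ l ∈ Λ, l ∈ largeSpectrum T}).exists_maximal
      ⟨∅, by simp [DissociatedModulo]⟩
  obtain ⟨hΛ, hspec⟩ := hΛmax.prop
  refine ⟨Λ, ?_, fun γ hγ ↦ ?_⟩
  · by_contra! hlt
    obtain ⟨Λ', hsub, rfl⟩ := exists_subset_card_eq hlt.le
    linarith [(hΛ.subset hsub).card_mul_exp_le (fun l hl ↦ hspec l (hsub hl)) hV hT hB]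
  by_cases hmem : γ ∈ Λ
  · refine ⟨0, zero_mem_largeSpectrum V, fun v ↦ ?_⟩
    simpa using single_le_sum (f := fun l : AddChar G ℂ ↦ ‖1 - l v‖)
      (fun _ _ ↦ norm_nonneg _) hmem
  · refine hΛ.exists_mem_norm_one_sub_le hmem fun hins ↦ ?_
    exact hΛmax.not_gt ⟨hins, fun l hl ↦ (mem_insert.1 hl).elim (· ▸ hγ) (hspec l)⟩
      (ssubset_insert hmem)

lemma norm_sum_apply_sub_sum_apply_le {S D : Finset G} (hS : S ⊆ D) (ψ : AddChar G ℂ) :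
    ‖∑ x ∈ D, ψ x - ∑ x ∈ S, ψ x‖ ≤ #D - #S := by
  classical
  rw [← sum_sdiff hS, add_sub_cancel_right]
  refine (norm_sum_apply_le_card _ _).trans_eq ?_
  rw [card_sdiff_of_subset hS, Nat.cast_sub (card_le_card hS)]

lemma norm_one_sub_apply_le_of_mem_largeSpectrum {D S : Finset G} {ψ : AddChar G ℂ} {v : G}
    {η : ℝ} (hη : 0 ≤ η) (hD : D.Nonempty) (hS : S ⊆ D) (hSv : ∀ x ∈ S, x - v ∈ D)
    (hcard : #D ≤ (1 + η) * #S) (hψ : ψ ∈ largeSpectrum D) : ‖1 - ψ v‖ ≤ 4 * η := by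
  classical
  have hDpos : (0 : ℝ) < #D := by exact_mod_cast hD.card_pos
  have hSD : (#S : ℝ) ≤ #D := by exact_mod_cast card_le_card hS
  have hshift : (1 - ψ v) * ∑ x ∈ D, ψ x = ∑ x ∈ D, ψ x - ∑ x ∈ D.image (· + v), ψ x := by
    rw [sum_image (add_left_injective v).injOn, sub_mul, one_mul, mul_comm, sum_mul]
    simp only [AddChar.map_add_eq_mul]
  have hS' : S ⊆ D.image (· + v) := fun x hx ↦
    mem_image.2 ⟨x - v, hSv x hx, sub_add_cancel x v⟩
  have hle : ‖1 - ψ v‖ * ‖∑ x ∈ D, ψ x‖ ≤ 2 * (#D - #S) := by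
    have hclose' := norm_sum_apply_sub_sum_apply_le hS' ψ
    rw [card_image_of_injective _ (add_left_injective v)] at hclose'
    rw [← norm_mul, hshift, ← sub_sub_sub_cancel_right _ _ (∑ x ∈ S, ψ x)]
    linarith [norm_sub_le (∑ x ∈ D, ψ x - ∑ x ∈ S, ψ x)
      (∑ x ∈ D.image (· + v), ψ x - ∑ x ∈ S, ψ x), norm_sum_apply_sub_sum_apply_le hS ψ]
  refine le_of_mul_le_mul_right ?_ hDpos
  calc ‖1 - ψ v‖ * #D ≤ ‖1 - ψ v‖ * (2 * ‖∑ x ∈ D, ψ x‖) := by gcongr; exact hψ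
    _ ≤ 4 * (#D - #S) := by linarith
    _ ≤ 4 * (η * #S) := by linarith
    _ ≤ 4 * η * #D := by rw [← mul_assoc]; gcongr

end Chang

/-! ### Fourier analysis of iterated difference sets -/

section Fourier

variable {G : Type*} [AddCommGroup G] [Fintype G]

/-- The unnormalised Fourier transform of a real function on a finite group. -/
noncomputable def dft (f : G → ℝ) (γ : AddChar G ℂ) : ℂ := ∑ y, f y * γ y

lemma sum_norm_dft_sq (g : G → ℝ) :
    ∑ γ, ‖dft g γ‖ ^ 2 = Fintype.card G * ∑ y, g y ^ 2 := by
  classical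
  have hexpand (γ : AddChar G ℂ) :
      (‖dft g γ‖ : ℂ) ^ 2 = ∑ y, ∑ y', (g y : ℂ) * g y' * γ (y - y') := by
    rw [← Complex.mul_conj', dft, map_sum, sum_mul_sum]
    refine sum_congr rfl fun y _ ↦ sum_congr rfl fun y' _ ↦ ?_
    rw [map_mul, Complex.conj_ofReal, ← AddChar.map_neg_eq_conj, sub_eq_add_neg,
      AddChar.map_add_eq_mul]
    ring
  have hcomplex : ∑ γ, (‖dft g γ‖ : ℂ) ^ 2 = Fintype.card G * ∑ y, (g y : ℂ) ^ 2 := by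
    simp only [hexpand]
    rw [sum_comm, mul_sum]
    refine sum_congr rfl fun y _ ↦ ?_
    rw [sum_comm, sum_eq_single y]
    · rw [← mul_sum, AddChar.sum_apply_eq_ite, if_pos (sub_self y)]
      ring
    · intro y' _ hne
      rw [← mul_sum, AddChar.sum_apply_eq_ite, if_neg (sub_ne_zero.2 hne.symm), mul_zero]
    · simp
  exact_mod_cast hcomplex

lemma card_mul_eq_sum_conj_dft (g : G → ℝ) (x : G) :
    (Fintype.card G : ℂ) * g x = ∑ γ, starRingEnd ℂ (dft g γ) * γ x := by
  classical
  have hexpand (γ : AddChar G ℂ) :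
      starRingEnd ℂ (dft g γ) * γ x = ∑ y, (g y : ℂ) * γ (x - y) := by
    rw [dft, map_sum, sum_mul]
    refine sum_congr rfl fun y _ ↦ ?_
    rw [map_mul, Complex.conj_ofReal, ← AddChar.map_neg_eq_conj, sub_eq_neg_add,
      AddChar.map_add_eq_mul, mul_assoc]
  simp only [hexpand]
  rw [sum_comm, sum_eq_single x]
  · rw [← mul_sum, AddChar.sum_apply_eq_ite, if_pos (sub_self x), mul_comm]
  · intro y _ hne
    rw [← mul_sum, AddChar.sum_apply_eq_ite, if_neg (sub_ne_zero.2 hne.symm), mul_zero]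
  · simp

lemma dft_ind [DecidableEq G] (A : Finset G) (γ : AddChar G ℂ) :
    dft (ind A) γ = ∑ x ∈ A, γ x := by
  simp [dft, ind, apply_ite (Complex.ofReal)]

lemma sum_norm_dft_mul_le (A : Finset G) (g : G → ℝ) :
    ∑ γ, ‖dft g γ‖ * ‖∑ x ∈ A, γ x‖ ≤ Fintype.card G * ((∑ y, g y ^ 2 + #A) / 2) := by
  classical
  have hA : ∑ γ : AddChar G ℂ, ‖∑ x ∈ A, γ x‖ ^ 2 = Fintype.card G * #A := by
    simpa [dft_ind, ind] using sum_norm_dft_sq (ind A)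
  calc ∑ γ, ‖dft g γ‖ * ‖∑ x ∈ A, γ x‖
      ≤ ∑ γ : AddChar G ℂ, (‖dft g γ‖ ^ 2 + ‖∑ x ∈ A, γ x‖ ^ 2) / 2 :=
        sum_le_sum fun γ _ ↦ by linarith [two_mul_le_add_sq ‖dft g γ‖ ‖∑ x ∈ A, γ x‖]
    _ = _ := by rw [← sum_div, sum_add_distrib, sum_norm_dft_sq, hA]; ring

end Fourier

section TuplePairs

variable {G : Type*} {T : Finset G} {m : ℕ}

/-- The pairs of `m`-tuples of elements of `T`, indexing the representations of the elements of
the iterated difference set `mT - mT`. -/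
def tuplePairs (T : Finset G) (m : ℕ) : Finset ((Fin m → G) × (Fin m → G)) :=
  Fintype.piFinset (fun _ ↦ T) ×ˢ Fintype.piFinset (fun _ ↦ T)

lemma mem_tuplePairs {p : (Fin m → G) × (Fin m → G)} :
    p ∈ tuplePairs T m ↔ (∀ i, p.1 i ∈ T) ∧ ∀ i, p.2 i ∈ T := by
  simp [tuplePairs, Fintype.mem_piFinset]

lemma card_tuplePairs (T : Finset G) (m : ℕ) : #(tuplePairs T m) = (#T ^ 2) ^ m := by
  simp only [tuplePairs, card_product, Fintype.card_piFinset_const]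
  ring

variable [AddCommGroup G]

/-- The element of `mT - mT` represented by a pair of `m`-tuples. -/
def totalDiff (p : (Fin m → G) × (Fin m → G)) : G := ∑ i, (p.1 i - p.2 i)

lemma sum_apply_totalDiff [Finite G] (T : Finset G) (m : ℕ) (γ : AddChar G ℂ) :
    ∑ p ∈ tuplePairs T m, γ (totalDiff p) = ((‖∑ x ∈ T, γ x‖ ^ 2) ^ m : ℝ) := by
  rw [tuplePairs, sum_product]
  push_cast
  rw [← Complex.mul_conj', mul_pow, ← map_pow, sum_pow', map_sum, sum_mul_sum]
  refine sum_congr rfl fun u _ ↦ sum_congr rfl fun u' _ ↦ ?_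
  rw [totalDiff, sum_sub_distrib, sub_eq_add_neg, AddChar.map_add_eq_mul,
    AddChar.map_neg_eq_conj, apply_sum_eq_prod, apply_sum_eq_prod]

lemma norm_sum_pow_mul_norm_one_sub_le [Finite G] {ξ : ℝ} (hξ : 0 ≤ ξ) {v : G}
    (hv : ∀ γ ∈ largeSpectrum T, ‖1 - γ v‖ ≤ ξ) (γ : AddChar G ℂ) (m : ℕ) :
    (‖∑ x ∈ T, γ x‖ ^ 2) ^ m * ‖1 - γ v‖ ≤ (ξ + 2 / 4 ^ m) * #(tuplePairs T m) := by
  rw [card_tuplePairs]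
  push_cast
  by_cases hγ : γ ∈ largeSpectrum T
  · calc (‖∑ x ∈ T, γ x‖ ^ 2) ^ m * ‖1 - γ v‖ ≤ ((#T : ℝ) ^ 2) ^ m * (ξ + 2 / 4 ^ m) := by
          gcongr
          · exact norm_sum_apply_le_card T γ
          · exact (hv γ hγ).trans (le_add_of_nonneg_right (by positivity))
      _ = _ := mul_comm _ _
  · have hsmall : ‖∑ x ∈ T, γ x‖ ≤ #T / 2 := by
      have hlt := not_le.1 (mt mem_largeSpectrum.2 hγ)
      linarith
    have htwo : ‖1 - γ v‖ ≤ 2 := by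
      refine (norm_sub_le _ _).trans ?_
      rw [AddChar.norm_apply, norm_one, one_add_one_eq_two]
    calc (‖∑ x ∈ T, γ x‖ ^ 2) ^ m * ‖1 - γ v‖ ≤ (((#T : ℝ) / 2) ^ 2) ^ m * 2 := by gcongr
      _ = 2 / 4 ^ m * ((#T : ℝ) ^ 2) ^ m := by rw [div_pow, div_pow]; norm_num; ring
      _ ≤ (ξ + 2 / 4 ^ m) * ((#T : ℝ) ^ 2) ^ m := by gcongr; linarith

variable [Fintype G]

lemma card_mul_sum_sum_add_totalDiff (A T : Finset G) (g : G → ℝ) (m : ℕ) (w : G) :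
    (Fintype.card G : ℂ) * (∑ x ∈ A, ∑ p ∈ tuplePairs T m, g (x + totalDiff p + w) : ℝ) =
      ∑ γ, starRingEnd ℂ (dft g γ) * (∑ x ∈ A, γ x) *
        (((‖∑ x ∈ T, γ x‖ ^ 2) ^ m : ℝ) : ℂ) * γ w := by
  push_cast
  simp only [mul_sum, card_mul_eq_sum_conj_dft, AddChar.map_add_eq_mul]
  rw [sum_congr rfl fun x _ ↦ sum_comm, sum_comm]
  refine sum_congr rfl fun γ _ ↦ ?_
  have hsum := sum_apply_totalDiff T m γ
  push_cast at hsum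
  rw [← hsum, sum_mul, sum_mul]
  refine sum_congr rfl fun x _ ↦ ?_
  rw [mul_sum, sum_mul]
  exact sum_congr rfl fun p _ ↦ by ring

lemma abs_sum_sum_add_totalDiff_sub_le (A : Finset G) (g : G → ℝ) (m : ℕ) {v : G} {ξ : ℝ}
    (hξ : 0 ≤ ξ) (hv : ∀ γ ∈ largeSpectrum T, ‖1 - γ v‖ ≤ ξ) :
    |∑ x ∈ A, ∑ p ∈ tuplePairs T m, g (x + totalDiff p + v) -
        ∑ x ∈ A, ∑ p ∈ tuplePairs T m, g (x + totalDiff p)| ≤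
      (ξ + 2 / 4 ^ m) * #(tuplePairs T m) * ((∑ y, g y ^ 2 + #A) / 2) := by
  let Φ (w : G) : ℝ := ∑ x ∈ A, ∑ p ∈ tuplePairs T m, g (x + totalDiff p + w)
  have hΦ0 : ∑ x ∈ A, ∑ p ∈ tuplePairs T m, g (x + totalDiff p) = Φ 0 := by
    simp only [Φ, add_zero]
  have hdiff : (Fintype.card G : ℂ) * ((Φ v - Φ 0 : ℝ) : ℂ) =
      ∑ γ, starRingEnd ℂ (dft g γ) * (∑ x ∈ A, γ x) *
        (((‖∑ x ∈ T, γ x‖ ^ 2) ^ m : ℝ) : ℂ) * (γ v - 1) := by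
    rw [Complex.ofReal_sub, mul_sub, card_mul_sum_sum_add_totalDiff,
      card_mul_sum_sum_add_totalDiff, ← sum_sub_distrib]
    simp only [AddChar.map_zero_eq_one, mul_sub]
  have hcard : (0 : ℝ) < Fintype.card G := by exact_mod_cast Fintype.card_pos
  refine le_of_mul_le_mul_left ?_ hcard
  rw [hΦ0]
  calc Fintype.card G * |Φ v - Φ 0| = ‖(Fintype.card G : ℂ) * ((Φ v - Φ 0 : ℝ) : ℂ)‖ := by
        rw [norm_mul, Complex.norm_natCast, Complex.norm_real, Real.norm_eq_abs]
    _ ≤ ∑ γ, ‖starRingEnd ℂ (dft g γ) * (∑ x ∈ A, γ x) *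
          (((‖∑ x ∈ T, γ x‖ ^ 2) ^ m : ℝ) : ℂ) * (γ v - 1)‖ := hdiff ▸ norm_sum_le _ _
    _ = ∑ γ, ‖dft g γ‖ * ‖∑ x ∈ A, γ x‖ * ((‖∑ x ∈ T, γ x‖ ^ 2) ^ m * ‖1 - γ v‖) := by
        refine sum_congr rfl fun γ _ ↦ ?_
        rw [norm_mul, norm_mul, norm_mul, RCLike.norm_conj, Complex.norm_real,
          Real.norm_of_nonneg (by positivity), norm_sub_rev, mul_assoc]
    _ ≤ ∑ γ, ‖dft g γ‖ * ‖∑ x ∈ A, γ x‖ * ((ξ + 2 / 4 ^ m) * #(tuplePairs T m)) :=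
        sum_le_sum fun γ _ ↦ mul_le_mul_of_nonneg_left
          (norm_sum_pow_mul_norm_one_sub_le hξ hv γ m) (by positivity)
    _ ≤ Fintype.card G * ((∑ y, g y ^ 2 + #A) / 2) *
          ((ξ + 2 / 4 ^ m) * #(tuplePairs T m)) := by
        rw [← sum_mul]; gcongr; exact sum_norm_dft_mul_le A g
    _ = _ := by ring

end TuplePairs

/-! ### Almost periods of a set of small relative density -/

section Parameters

/-- The number `m` of steps of a walk in `mT - mT` used for a set of relative density `2 ^ (-h)`:
`4 ^ m` has to beat `2 ^ (2 * h)`. -/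
def walkLength (h : ℕ) : ℕ := h + 13

/-- The number of samples making a sample mean accurate up to `1 / (4000 * walkLength h)`, with
the same bound on the proportion of exceptional points. -/
def sampleSize (h : ℕ) : ℕ := 64000000 * walkLength h ^ 2 * (h + 15 + walkLength h)

/-- The set of almost periods has relative density at least `2 ^ (-logPeriodDensity h)`. -/
def logPeriodDensity (h : ℕ) : ℕ := (h + 1) * sampleSize h + 1

/-- The bound of Chang's theorem for the large spectrum of a set of relative density `2 ^ (-t)`. -/
def changRank (t : ℕ) : ℕ := 8 * (t + 3)

/-- The number of characters added to a Bohr set of rank `d` when passing to almost periods of a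
set of relative density `2 ^ (-h)`. -/
def rankGain (h : ℕ) : ℕ := changRank (logPeriodDensity h)

/-- The factor by which the radius decreases in the same passage. -/
@[irreducible] def radiusLoss (d h : ℕ) : ℕ :=
  1568 * walkLength h * d ^ 2 * rankGain h * 2 ^ (h + 15)

lemma walkLength_pos (h : ℕ) : 0 < walkLength h := by unfold walkLength; omega

lemma sampleSize_pos (h : ℕ) : 0 < sampleSize h := by
  have := walkLength_pos h
  unfold sampleSize
  positivity

lemma rankGain_pos (h : ℕ) : 0 < rankGain h := by unfold rankGain changRank; omega

lemma radiusLoss_pos {d : ℕ} (hd : d ≠ 0) (h : ℕ) : 0 < radiusLoss d h := by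
  have := walkLength_pos h
  have := rankGain_pos h
  unfold radiusLoss
  positivity

lemma two_pow_le_exp (n : ℕ) : (2 : ℝ) ^ n ≤ Real.exp n := by
  calc (2 : ℝ) ^ n ≤ Real.exp 1 ^ n := by gcongr; linarith [Real.add_one_le_exp (1 : ℝ)]
    _ = Real.exp n := by rw [← Real.exp_nat_mul, mul_one]

lemma four_mul_exp_neg_sampleSize_le (h : ℕ) :
    4 * 2 ^ (h + 1) * Real.exp (-(sampleSize h * (1 / (4000 * walkLength h : ℝ)) ^ 2 / 4)) ≤
      1 / (4000 * walkLength h) := by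
  have hm : (0 : ℝ) < walkLength h := by exact_mod_cast walkLength_pos h
  have hexponent : sampleSize h * (1 / (4000 * walkLength h : ℝ)) ^ 2 / 4 =
      (h + 15 + walkLength h : ℕ) := by
    rw [sampleSize]; push_cast; field_simp; norm_num
  have hle_two_pow : (walkLength h : ℝ) ≤ 2 ^ walkLength h := by
    exact_mod_cast Nat.lt_two_pow_self.le
  rw [hexponent, Real.exp_neg]
  calc 4 * 2 ^ (h + 1) * (Real.exp (h + 15 + walkLength h : ℕ))⁻¹
      ≤ 4 * 2 ^ (h + 1) * ((2 : ℝ) ^ (h + 15 + walkLength h))⁻¹ := by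
        gcongr; exact two_pow_le_exp _
    _ = 1 / (4096 * 2 ^ walkLength h) := by rw [pow_add, pow_add, pow_add]; field_simp; norm_num
    _ ≤ 1 / (4000 * walkLength h) := by gcongr; norm_num

lemma inv_two_pow_add_two_div_four_pow_mul_le (h : ℕ) :
    (1 / 2 ^ (h + 12) + 2 / 4 ^ walkLength h) * 2 ^ (h + 1) ≤ (0.002 : ℝ) := by
  have hfour : (4 : ℝ) ^ walkLength h = 2 ^ (h + 12) * 2 ^ (h + 14) := by
    rw [walkLength, ← pow_add, show (4 : ℝ) = 2 ^ 2 by norm_num, ← pow_mul]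
    congr 1; ring
  have htwo : (2 : ℝ) ≤ 2 ^ (h + 14) :=
    le_self_pow₀ (by norm_num) (by omega)
  calc (1 / 2 ^ (h + 12) + 2 / 4 ^ walkLength h) * (2 : ℝ) ^ (h + 1)
      = (1 + 2 / 2 ^ (h + 14)) / 2 ^ 11 := by
        rw [hfour, pow_add _ h 12, pow_add _ h 1, pow_add _ h 14]; field_simp
    _ ≤ (1 + 1) / 2 ^ 11 := by gcongr; exact (div_le_one (by positivity)).2 htwo
    _ ≤ 0.002 := by norm_num

end Parameters

section Smoothing

variable {G : Type*} [AddCommGroup G] [DecidableEq G] {A S T V X : Finset G} {m : ℕ}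

lemma one_sub_mul_card_le_sum_localDensity {δ : ℝ} (hA : A.Nonempty)
    (hS : (1 - δ) * #A ^ 2 ≤ ∑ a ∈ A, ∑ a' ∈ A, ind S (a - a')) :
    (1 - δ) * #A ≤ ∑ x ∈ A, localDensity A S x := by
  have hpos : (0 : ℝ) < #A := by exact_mod_cast hA.card_pos
  simp only [localDensity]
  rw [← sum_div, le_div_iff₀ hpos]
  linarith

lemma exists_mul_card_le_sum_ind_add {c : ℝ} (hA : A.Nonempty) (hT : T.Nonempty)
    (h : ∀ v ∈ V, c * (#(tuplePairs T m) * #A) ≤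
      ∑ x ∈ A, ∑ p ∈ tuplePairs T m, localDensity A S (x + totalDiff p + v)) :
    ∃ u, c * #V ≤ ∑ v ∈ V, ind S (u + v) := by
  have hpos : (0 : ℝ) < #A := by exact_mod_cast hA.card_pos
  have hT' : (tuplePairs T m).Nonempty := by
    rw [← card_pos, card_tuplePairs]
    have := hT.card_pos
    positivity
  have hswap : ∑ v ∈ V, ∑ x ∈ A, ∑ p ∈ tuplePairs T m, localDensity A S (x + totalDiff p + v) =
      (∑ x ∈ A, ∑ p ∈ tuplePairs T m, ∑ a ∈ A, ∑ v ∈ V,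
        ind S (x + totalDiff p - a + v)) / #A := by
    rw [sum_comm, sum_div]
    refine sum_congr rfl fun x _ ↦ ?_
    rw [sum_comm, sum_div]
    refine sum_congr rfl fun p _ ↦ ?_
    simp only [localDensity]
    rw [← sum_div, sum_comm]
    simp only [add_sub_right_comm]
  have htotal := card_nsmul_le_sum _ _ _ h
  rw [hswap, le_div_iff₀ hpos, nsmul_eq_mul] at htotal
  by_contra! hlt
  have hlt_total : ∑ x ∈ A, ∑ p ∈ tuplePairs T m, ∑ a ∈ A, ∑ v ∈ V,
      ind S (x + totalDiff p - a + v) < ∑ _x ∈ A, ∑ _p ∈ tuplePairs T m, ∑ _a ∈ A, c * #V :=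
    sum_lt_sum_of_nonempty hA fun x _ ↦ sum_lt_sum_of_nonempty hT' fun p _ ↦
      sum_lt_sum_of_nonempty hA fun a _ ↦ hlt _
  simp only [sum_const, nsmul_eq_mul] at hlt_total
  linarith

lemma exists_subset_sum_localDensity_totalDiff {D : Finset G} {K ε : ℝ} {k : ℕ} (hA : A.Nonempty)
    (hD : 0 ∈ D) (hk : k ≠ 0) (hm : m ≠ 0) (hε : 0 < ε) (hε1 : ε ≤ 1) (hXA : #X ≤ K * #A)
    (hkε : 4 * K * Real.exp (-(k * (ε / (4 * m)) ^ 2 / 4)) ≤ ε / (4 * m))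
    (hX : ∀ j ≤ m, ∀ t t' : Fin j → G, (∀ i, t i ∈ D) → (∀ i, t' i ∈ D) → ∀ x ∈ A,
      x + ∑ i, (t i - t' i) ∈ X) (S : Finset G) :
    ∃ T ⊆ D, #D ≤ 2 * K ^ k * #T ∧ ∀ p ∈ tuplePairs T m,
      ∑ x ∈ A, localDensity A S x - ε * #A ≤ ∑ x ∈ A, localDensity A S (x + totalDiff p) := by
  have hm1 : (1 : ℝ) ≤ m := by exact_mod_cast Nat.one_le_iff_ne_zero.2 hm
  have hδ1 : ε / (4 * m) ≤ 1 := (div_le_one (by positivity)).2 (by linarith)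
  have hXD : ∀ a ∈ A, ∀ t ∈ D, a + t ∈ X := fun a ha t ht ↦ by
    simpa using hX 1 (Nat.one_le_iff_ne_zero.2 hm) (fun _ ↦ t) (fun _ ↦ 0) (fun _ ↦ ht)
      (fun _ ↦ hD) a ha
  obtain ⟨T, hTD, hcard, g, hg⟩ := exists_almost_periods hA ⟨0, hD⟩ hk (by positivity) hδ1
    (by positivity) hXA hkε hXD S
  refine ⟨T, hTD, hcard, fun p hp ↦ ?_⟩
  obtain ⟨hp1, hp2⟩ := mem_tuplePairs.1 hp
  have hwalk := sum_localDensity_sub_le_of_forall_deviationSet (by positivity) hg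
    (fun j hj t t' ht ht' ↦ hX j hj t t' (fun i ↦ hTD (ht i)) fun i ↦ hTD (ht' i)) hp1 hp2
  rwa [show m * (2 * (ε / (4 * m)) + 2 * (ε / (4 * m))) = ε by field_simp; norm_num] at hwalk

variable [Finite G]

/- The local density is truncated to `X` to make it square-summable with a bound of order `#A`;
the walk does not leave `X`. -/
lemma mul_card_le_sum_sum_localDensity_add {K c ξ : ℝ} {v : G} (hK : 1 ≤ K) (hXA : #X ≤ K * #A)
    (hX : ∀ x ∈ A, ∀ p ∈ tuplePairs T m, x + totalDiff p ∈ X) (hξ : 0 ≤ ξ)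
    (hv : ∀ γ ∈ largeSpectrum T, ‖1 - γ v‖ ≤ ξ)
    (hc : ∀ p ∈ tuplePairs T m, c * #A ≤ ∑ x ∈ A, localDensity A S (x + totalDiff p)) :
    (c - (ξ + 2 / 4 ^ m) * K) * (#(tuplePairs T m) * #A) ≤
      ∑ x ∈ A, ∑ p ∈ tuplePairs T m, localDensity A S (x + totalDiff p + v) := by
  have := Fintype.ofFinite G
  set g : G → ℝ := fun y ↦ ind X y * localDensity A S y with hg
  have hsq : ∑ y, g y ^ 2 ≤ #X := by
    rw [← sum_ind X]
    refine sum_le_sum fun y _ ↦ ?_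
    have hnonneg := ind_nonneg X y
    have hle : g y ≤ ind X y := mul_le_of_le_one_right hnonneg (localDensity_le_one A S y)
    have hpow := pow_le_of_le_one (mul_nonneg hnonneg (localDensity_nonneg A S y))
      (hle.trans (ind_le_one X y)) two_ne_zero
    exact hpow.trans hle
  have hlarge : c * (#(tuplePairs T m) * #A) ≤
      ∑ x ∈ A, ∑ p ∈ tuplePairs T m, g (x + totalDiff p) := by
    rw [sum_comm, mul_left_comm, ← nsmul_eq_mul]
    refine card_nsmul_le_sum _ _ _ fun p hp ↦ (hc p hp).trans_eq (sum_congr rfl fun x hx ↦ ?_)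
    simp only [hg]
    rw [ind_of_mem (hX x hx p hp), one_mul]
  have hdrop : ∑ x ∈ A, ∑ p ∈ tuplePairs T m, g (x + totalDiff p + v) ≤
      ∑ x ∈ A, ∑ p ∈ tuplePairs T m, localDensity A S (x + totalDiff p + v) :=
    sum_le_sum fun x _ ↦ sum_le_sum fun p _ ↦
      mul_le_of_le_one_left (localDensity_nonneg A S _) (ind_le_one X _)
  have hfourier := (abs_le.1 (abs_sum_sum_add_totalDiff_sub_le A g m hξ hv)).1
  have herror : (ξ + 2 / 4 ^ m) * #(tuplePairs T m) * ((∑ y, g y ^ 2 + #A) / 2) ≤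
      (ξ + 2 / 4 ^ m) * #(tuplePairs T m) * (K * #A) := by
    gcongr
    linarith [le_mul_of_one_le_left (#A).cast_nonneg hK]
  linarith

end Smoothing

section BohrSetControl

variable {G : Type*} [AddCommGroup G] [Fintype G] {Γ : Finset (AddChar G ℂ)} {d : ℕ} {ρ κ σ : ℝ}

lemma add_sum_sub_mem_bohrSet {j m : ℕ} (hj : j ≤ m) {t t' : Fin j → G} {x : G} {τ : ℝ}
    (hτ : 0 ≤ τ) (hτσ : 2 * m * τ ≤ σ) (ht : ∀ i, t i ∈ bohrSet Γ τ)
    (ht' : ∀ i, t' i ∈ bohrSet Γ τ) (hx : x ∈ bohrSet Γ ρ) :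
    x + ∑ i, (t i - t' i) ∈ bohrSet Γ (ρ + σ) := by
  refine bohrSet_mono ?_ (add_mem_bohrSet hx (sum_mem_bohrSet (s := univ) fun i _ ↦
    sub_mem_bohrSet (ht i) (ht' i)))
  rw [card_univ, Fintype.card_fin]
  have hjm : (j : ℝ) * (τ + τ) ≤ m * (τ + τ) := by gcongr
  linarith

lemma exists_finset_control_largeSpectrum_of_isRegular {T : Finset G} {t M : ℕ} (hd : #Γ ≤ d)
    (hd0 : d ≠ 0) (hM : M ≠ 0) (hρ : 0 ≤ ρ) (hκ : 0 < κ) (hreg : IsRegular Γ ρ κ 1)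
    (hT : T ⊆ bohrSet Γ ρ) (hcard : #(bohrSet Γ ρ) ≤ 2 ^ t * (#T : ℝ)) :
    ∃ Λ : Finset (AddChar G ℂ), #Λ ≤ changRank t ∧ ∀ v ∈ bohrSet Γ (κ / changRank t / (28 * d * M)),
      ∀ γ ∈ largeSpectrum T, ‖1 - γ v‖ ≤ 4 / M + ∑ l ∈ Λ, ‖1 - l v‖ := by
  have hn : (0 : ℝ) < changRank t := by unfold changRank; positivity
  obtain ⟨τ, hτ_lower, hτ_upper, hτ_reg⟩ := exists_isRegular hd hd0 hM (div_pos hκ hn)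
  set ν := κ / changRank t / (28 * d * M) with hν
  have hν0 : 0 ≤ ν := by positivity
  have hcard_add : (#(bohrSet Γ (ρ + κ)) : ℝ) ≤ 2 * #(bohrSet Γ ρ) := by
    have hadd := hreg.card_add_le hκ.le zero_le_one
    linarith
  have hTpos : (0 : ℝ) < 2 ^ t * #T := (card_bohrSet_pos hρ).trans_le hcard
  have hexp : 2 * (#(bohrSet Γ (ρ + κ)) : ℝ) < #T * Real.exp ((changRank t : ℕ) / 8) := by
    calc 2 * (#(bohrSet Γ (ρ + κ)) : ℝ) < 8 * (2 ^ t * #T) := by linarith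
      _ = #T * 2 ^ (t + 3) := by ring
      _ ≤ #T * Real.exp (t + 3 : ℕ) := by gcongr; exact two_pow_le_exp _
      _ = _ := by rw [changRank]; push_cast; ring_nf
  obtain ⟨Λ, hΛ, hspec⟩ := exists_finset_control_largeSpectrum (V := bohrSet Γ τ)
    (bohrSet_nonempty (hν0.trans hτ_lower)) hT (fun u hu x hx ↦ by
      refine bohrSet_mono ?_ (sub_mem_bohrSet hx (sum_mem_bohrSet (s := univ) fun i _ ↦ hu i))
      rw [card_univ, Fintype.card_fin]
      linarith [(le_div_iff₀ hn).1 hτ_upper]) hexp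
  refine ⟨Λ, hΛ, fun v hv γ hγ ↦ ?_⟩
  obtain ⟨ψ, hψ, hle⟩ := hspec γ hγ
  have halmost : ‖1 - ψ v‖ ≤ 4 * (1 / M) :=
    norm_one_sub_apply_le_of_mem_largeSpectrum (by positivity)
      (bohrSet_nonempty (hν0.trans hτ_lower)) (bohrSet_mono (sub_le_self τ hν0))
      (fun x hx ↦ by simpa using sub_mem_bohrSet hx hv) (hτ_reg.card_le hν0) hψ
  linarith [hle v, mul_one_div (4 : ℝ) M]

/- The two summands `ξ / 2` of the bound come from the regularity of `Γ` and from the radius of `Λ`,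
where `ξ = 1 / 2 ^ (h + 12)`. -/
lemma exists_finset_norm_one_sub_apply_le {T : Finset G} {h : ℕ} (hd : #Γ ≤ d) (hd0 : d ≠ 0)
    (hσ : 0 < σ) (hσ2 : σ ≤ 2) (hρ : 0 ≤ ρ)
    (hreg : IsRegular Γ ρ (σ / (2 * walkLength h) / (28 * d)) 1) (hT : T ⊆ bohrSet Γ ρ)
    (hcard : #(bohrSet Γ ρ) ≤ 2 ^ logPeriodDensity h * (#T : ℝ)) :
    ∃ Λ : Finset (AddChar G ℂ), #Λ ≤ rankGain h ∧ ∀ ρ', 0 ≤ ρ' → ρ' ≤ σ / radiusLoss d h →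
      ∀ v ∈ bohrSet (Γ ∪ Λ) ρ', ∀ γ ∈ largeSpectrum T, ‖1 - γ v‖ ≤ 1 / 2 ^ (h + 12) := by
  have hd1 : (1 : ℝ) ≤ d := by exact_mod_cast Nat.one_le_iff_ne_zero.2 hd0
  have hm : (1 : ℝ) ≤ walkLength h := by exact_mod_cast walkLength_pos h
  have hn : (0 : ℝ) < rankGain h := by exact_mod_cast rankGain_pos h
  obtain ⟨Λ, hΛ, hspec⟩ := exists_finset_control_largeSpectrum_of_isRegular (M := 2 ^ (h + 15)) hd
    hd0 (by positivity) hρ (by positivity) hreg hT hcard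
  refine ⟨Λ, hΛ, fun ρ' hρ' hle v hv γ hγ ↦ ?_⟩
  have hradius : σ / radiusLoss d h = σ / (2 * walkLength h) / (28 * d) /
      changRank (logPeriodDensity h) / (28 * d * (2 ^ (h + 15) : ℕ)) := by
    rw [radiusLoss, ← rankGain]; push_cast; field_simp; norm_num
  have hΛsum : ∑ l ∈ Λ, ‖1 - l v‖ ≤ rankGain h * ρ' := by
    refine (sum_le_card_nsmul _ _ ρ' fun l hl ↦ mem_bohrSet.1 hv l (mem_union_right _ hl)).trans ?_
    rw [nsmul_eq_mul]
    gcongr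
    exact hΛ
  have hrank : rankGain h * ρ' ≤ 1 / 2 ^ (h + 12) / 2 := by
    calc rankGain h * ρ' ≤ rankGain h * (σ / radiusLoss d h) := by gcongr
      _ = σ / (1568 * (walkLength h * d ^ 2) * 2 ^ (h + 15)) := by
        rw [radiusLoss]; push_cast; field_simp
      _ ≤ 2 / (1568 * 1 * 2 ^ (h + 15)) := by
        gcongr
        exact one_le_mul_of_one_le_of_one_le hm (one_le_pow₀ hd1)
      _ ≤ 2 / (32 * 1 * 2 ^ (h + 15)) := by gcongr; norm_num
      _ ≤ 1 / 2 ^ (h + 12) / 2 := by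
        rw [pow_add _ h 15, pow_add _ h 12]
        field_simp
        norm_num
  have hbound := hspec v (bohrSet_mono (hle.trans_eq hradius)
    (bohrSet_anti subset_union_left hv)) γ hγ
  have hM : 4 / ((2 ^ (h + 15) : ℕ) : ℝ) = 1 / 2 ^ (h + 12) / 2 := by
    push_cast
    rw [pow_add _ h 15, pow_add _ h 12]
    field_simp
    norm_num
  linarith

variable [DecidableEq G] {A : Finset G} {h : ℕ}

lemma exists_isRegular_subset_sum_localDensity_totalDiff (hd : #Γ ≤ d) (hd0 : d ≠ 0) (hσ : 0 < σ)
    (hA : A.Nonempty) (hAB : A ⊆ bohrSet Γ ρ)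
    (hXA : #(bohrSet Γ (ρ + σ)) ≤ 2 ^ (h + 1) * (#A : ℝ)) (S : Finset G) :
    ∃ τ, 0 ≤ τ ∧ 2 * walkLength h * τ ≤ σ ∧
      IsRegular Γ τ (σ / (2 * walkLength h) / (28 * d)) 1 ∧ ∃ T ⊆ bohrSet Γ τ,
        #(bohrSet Γ τ) ≤ 2 ^ logPeriodDensity h * (#T : ℝ) ∧ ∀ p ∈ tuplePairs T (walkLength h),
          ∑ x ∈ A, localDensity A S x - 1 / 1000 * #A ≤
            ∑ x ∈ A, localDensity A S (x + totalDiff p) := by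
  have hm : (0 : ℝ) < walkLength h := by exact_mod_cast walkLength_pos h
  obtain ⟨τ, hτ_lower, hτ_upper, hτ_reg⟩ :=
    exists_isRegular hd hd0 one_ne_zero (div_pos hσ (mul_pos two_pos hm))
  simp only [Nat.cast_one, mul_one, div_one] at hτ_lower hτ_reg
  have hτ : 0 ≤ τ := le_trans (by positivity) hτ_lower
  have hτσ : 2 * walkLength h * τ ≤ σ := by
    rw [mul_comm]
    exact (le_div_iff₀ (by positivity)).1 hτ_upper
  have hε : 1 / 1000 / (4 * walkLength h : ℝ) = 1 / (4000 * walkLength h) := by field_simp; norm_num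
  obtain ⟨T, hT, hcard, hwalk⟩ := exists_subset_sum_localDensity_totalDiff (ε := 1 / 1000) hA
    (zero_mem_bohrSet hτ) (sampleSize_pos h).ne' (walkLength_pos h).ne' (by norm_num) (by norm_num)
    hXA (by rw [hε]; exact four_mul_exp_neg_sampleSize_le h)
    (fun j hj t t' ht ht' x hx ↦ add_sum_sub_mem_bohrSet hj hτ hτσ ht ht' (hAB hx)) S
  refine ⟨τ, hτ, hτσ, hτ_reg, T, hT, ?_, hwalk⟩
  rwa [logPeriodDensity, pow_succ', pow_mul]

/- Chang's theorem controls the large spectrum of the almost periods `T`, so the smoothed density is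
nearly invariant under the smaller Bohr set. -/
theorem exists_bohrSet_mul_card_le_sum_ind (hd : #Γ ≤ d) (hd0 : d ≠ 0)
    (hσ : 0 < σ) (hσ2 : σ ≤ 2)
    (hdouble : (#(bohrSet Γ (ρ + σ)) : ℝ) ≤ 2 * #(bohrSet Γ ρ)) (hA : A.Nonempty)
    (hAB : A ⊆ bohrSet Γ ρ) (hcard : #(bohrSet Γ ρ) ≤ 2 ^ h * (#A : ℝ)) {S : Finset G}
    (hS : (1 - 1 / 1000) * (#A : ℝ) ^ 2 ≤ ∑ a ∈ A, ∑ a' ∈ A, ind S (a - a')) :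
    ∃ Λ : Finset (AddChar G ℂ), #Λ ≤ rankGain h ∧ ∀ ρ', 0 ≤ ρ' → ρ' ≤ σ / radiusLoss d h →
      ∃ u, 0.996 * (#(bohrSet (Γ ∪ Λ) ρ') : ℝ) ≤ ∑ v ∈ bohrSet (Γ ∪ Λ) ρ', ind S (u + v) := by
  have hXA : #(bohrSet Γ (ρ + σ)) ≤ 2 ^ (h + 1) * (#A : ℝ) := by rw [pow_succ]; linarith
  obtain ⟨τ, hτ, hτσ, hreg, T, hT, hTcard, hwalk⟩ :=
    exists_isRegular_subset_sum_localDensity_totalDiff hd hd0 hσ hA hAB hXA S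
  obtain ⟨Λ, hΛ, hspec⟩ := exists_finset_norm_one_sub_apply_le hd hd0 hσ hσ2 hτ hreg hT hTcard
  have hTne : T.Nonempty := by
    rw [← card_pos, ← Nat.cast_pos (α := ℝ)]
    exact pos_of_mul_pos_right ((card_bohrSet_pos hτ).trans_le hTcard) (by positivity)
  have hwalk' : ∀ p ∈ tuplePairs T (walkLength h),
      0.998 * (#A : ℝ) ≤ ∑ x ∈ A, localDensity A S (x + totalDiff p) := fun p hp ↦ by
    linarith [hwalk p hp, one_sub_mul_card_le_sum_localDensity hA hS]
  refine ⟨Λ, hΛ, fun ρ' hρ' hle ↦ exists_mul_card_le_sum_ind_add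
    (m := walkLength h) hA hTne fun v hv ↦ ?_⟩
  refine le_trans ?_ (mul_card_le_sum_sum_localDensity_add (one_le_pow₀ one_le_two) hXA
    (fun x hx p hp ↦ ?_) (by positivity) (hspec ρ' hρ' hle v hv) hwalk')
  · gcongr
    linarith [inv_two_pow_add_two_div_four_pow_mul_le h]
  · obtain ⟨hp1, hp2⟩ := mem_tuplePairs.1 hp
    exact add_sum_sub_mem_bohrSet le_rfl hτ hτσ (fun i ↦ hT (hp1 i)) (fun i ↦ hT (hp2 i)) (hAB hx)

end BohrSetControl

/-! ### Sifting out of a progression-free set -/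

section Doubling

variable {G : Type*} [AddCommGroup G] [Fintype G] {Γ Γ' : Finset (AddChar G ℂ)} {ρ : ℝ}

/-- The Bohr sets of `Γ'` are the dilates by `2` of the Bohr sets of `Γ`. -/
def IsDoubling (Γ Γ' : Finset (AddChar G ℂ)) : Prop :=
  ∀ (ρ : ℝ) (x : G), x + x ∈ bohrSet Γ' ρ ↔ x ∈ bohrSet Γ ρ

lemma exists_isDoubling (h2 : Function.Injective fun x : G ↦ x + x) (Γ : Finset (AddChar G ℂ)) :
    ∃ Γ', #Γ' ≤ #Γ ∧ IsDoubling Γ Γ' := by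
  let e : G ≃+ G := AddEquiv.ofBijective (AddMonoidHom.mk' (fun x : G ↦ x + x) fun a b ↦
    add_add_add_comm a b a b) (Finite.injective_iff_bijective.1 h2)
  refine ⟨Γ.image fun γ ↦ γ.compAddMonoidHom e.symm.toAddMonoidHom, card_image_le, fun ρ x ↦ ?_⟩
  rw [mem_bohrSet, mem_bohrSet, forall_mem_image]
  refine forall₂_congr fun γ _ ↦ ?_
  rw [AddChar.compAddMonoidHom_apply, show e.symm.toAddMonoidHom (x + x) = x from
    e.symm_apply_apply x]

lemma IsDoubling.bohrSet_eq_image [DecidableEq G] (h : IsDoubling Γ Γ')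
    (h2 : Function.Injective fun x : G ↦ x + x) (ρ : ℝ) :
    bohrSet Γ' ρ = (bohrSet Γ ρ).image fun x ↦ x + x := by
  ext x
  obtain ⟨y, rfl⟩ := Finite.surjective_of_injective h2 x
  simp only [h ρ y, mem_image]
  exact ⟨fun hy ↦ ⟨y, hy, rfl⟩, fun ⟨z, hz, hzy⟩ ↦ h2 hzy ▸ hz⟩

lemma IsDoubling.card_bohrSet (h : IsDoubling Γ Γ') (h2 : Function.Injective fun x : G ↦ x + x)
    (ρ : ℝ) : #(bohrSet Γ' ρ) = #(bohrSet Γ ρ) := by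
  classical
  rw [h.bohrSet_eq_image h2, card_image_of_injective _ h2]

lemma IsDoubling.bohrSet_subset (h : IsDoubling Γ Γ') (h2 : Function.Injective fun x : G ↦ x + x)
    (ρ : ℝ) : bohrSet Γ' ρ ⊆ bohrSet Γ (ρ + ρ) := by
  classical
  rw [h.bohrSet_eq_image h2, image_subset_iff]
  exact fun x hx ↦ add_mem_bohrSet hx hx

end Doubling

section Balanced

variable {G : Type*} [DecidableEq G] {A B B' : Finset G}

/-- The balanced function `1_A - α * 1_B` of a set `A ⊆ B` of relative density `α`. -/
def balanced (A B : Finset G) (α : ℝ) (x : G) : ℝ := ind A x - α * ind B x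

lemma card_sub_le_sum_ind {e : G → G} (hA : A ⊆ B) (hB' : B' ⊆ B) (he : ∀ x ∈ B', e x ∈ B) :
    (#A : ℝ) - (#B - #B') ≤ ∑ y ∈ A, ind B (e y) := by
  have hinter : (#(A ∩ B') : ℝ) ≤ ∑ y ∈ A, ind B (e y) := by
    calc (#(A ∩ B') : ℝ) = ∑ y ∈ A, ind B' y := by simp [ind]
      _ ≤ _ := sum_le_sum fun y _ ↦ by
        by_cases hy : y ∈ B'
        · rw [ind_of_mem hy, ind_of_mem (he y hy)]
        · rw [ind_of_notMem hy]; exact ind_nonneg B _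
  have hsdiff : (#(A \ B') : ℝ) ≤ #B - #B' := by
    rw [← cast_card_sdiff hB']
    exact_mod_cast card_le_card (sdiff_subset_sdiff hA le_rfl)
  have hsplit : (#(A ∩ B') : ℝ) + #(A \ B') = #A := by exact_mod_cast card_inter_add_card_sdiff A B'
  linarith

lemma sum_balanced_mul_balanced_le [Fintype G] {e : Equiv.Perm G} {α η : ℝ} (hA : A ⊆ B)
    (hB' : B' ⊆ B) (he : ∀ x ∈ B', e x ∈ B) (he' : ∀ x ∈ B', e.symm x ∈ B) (hη : 0 ≤ η)
    (hcard : (#B : ℝ) ≤ (1 + η) * #B') (hα0 : 0 ≤ α) (hα : α * #B = #A) :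
    ∑ y, balanced A B α y * balanced A B α (e y) + (α * #A - 2 * η * #A) ≤
      ∑ y, ind A y * ind A (e y) := by
  have hgap : (#B : ℝ) - #B' ≤ η * #B := by
    have : η * (#B' : ℝ) ≤ η * #B := by gcongr
    linarith
  have hAB := card_sub_le_sum_ind hA hB' he
  have hBA := card_sub_le_sum_ind hA hB' he'
  have hBB : ∑ y ∈ B, ind B (e y) ≤ #B := by
    simpa using sum_le_card_nsmul B _ 1 fun y _ ↦ ind_le_one B (e y)
  have hswap : ∑ y, ind B y * ind A (e y) = ∑ y ∈ A, ind B (e.symm y) := by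
    rw [← sum_ind_mul A, ← Equiv.sum_comp e fun y ↦ ind A y * _]
    simp [mul_comm]
  have hexpand : ∑ y, balanced A B α y * balanced A B α (e y) = ∑ y, ind A y * ind A (e y) -
      α * ∑ y ∈ A, ind B (e y) - α * ∑ y ∈ A, ind B (e.symm y) + α ^ 2 * ∑ y ∈ B, ind B (e y) := by
    rw [← hswap, ← sum_ind_mul A, ← sum_ind_mul B]
    simp only [mul_sum, ← sum_sub_distrib, ← sum_add_distrib]
    exact sum_congr rfl fun y _ ↦ by unfold balanced; ring
  have hPQ : α * (2 * #A - 2 * (η * #B)) ≤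
      α * (∑ y ∈ A, ind B (e y) + ∑ y ∈ A, ind B (e.symm y)) := by gcongr; linarith
  have hR : α ^ 2 * ∑ y ∈ B, ind B (e y) ≤ α ^ 2 * #B := by gcongr
  rw [hexpand, ← hα]
  rw [← hα] at hPQ
  linarith

variable [AddCommGroup G] [Fintype G] {Γ : Finset (AddChar G ℂ)} {ρ κ α η : ℝ}

lemma autocorr_balanced_le {u : G} (hA : A ⊆ bohrSet Γ ρ) (hη : 0 ≤ η) (hκ : 0 ≤ κ)
    (hreg : IsRegular Γ ρ κ η) (hα0 : 0 ≤ α) (hα : α * #(bohrSet Γ ρ) = #A)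
    (hu : u ∈ bohrSet Γ κ) :
    autocorr (balanced A (bohrSet Γ ρ) α) u + (α * #A - 2 * η * #A) ≤ autocorr (ind A) u :=
  sum_balanced_mul_balanced_le (e := Equiv.addRight u) hA (bohrSet_mono (sub_le_self ρ hκ))
    (fun x hx ↦ by simpa using add_mem_bohrSet hx hu)
    (fun x hx ↦ by simpa [sub_eq_add_neg] using sub_mem_bohrSet hx hu) hη (hreg.card_le hκ) hα0 hα

lemma selfConv_balanced_le {u : G} (hA : A ⊆ bohrSet Γ ρ) (hη : 0 ≤ η) (hκ : 0 ≤ κ)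
    (hreg : IsRegular Γ ρ κ η) (hα0 : 0 ≤ α) (hα : α * #(bohrSet Γ ρ) = #A)
    (hu : u ∈ bohrSet Γ κ) :
    selfConv (balanced A (bohrSet Γ ρ) α) u + (α * #A - 2 * η * #A) ≤ selfConv (ind A) u :=
  sum_balanced_mul_balanced_le (e := Equiv.subLeft u) hA (bohrSet_mono (sub_le_self ρ hκ))
    (fun x hx ↦ by simpa using sub_mem_bohrSet hu hx)
    (fun x hx ↦ by simpa [add_comm, sub_eq_add_neg] using sub_mem_bohrSet hu hx) hη
    (hreg.card_le hκ) hα0 hα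

end Balanced

section Moments

variable {G : Type*} [AddCommGroup G]

lemma selfConv_ind_add_self_le_one [Fintype G] [DecidableEq G] {A A₁ : Finset G} {z : G}
    (hA : ThreeAPFree (A : Set G)) (hA₁ : A₁ ⊆ A) (hz : z ∈ A) :
    selfConv (ind A₁) (z + z) ≤ 1 := by
  calc selfConv (ind A₁) (z + z) ≤ ∑ y, if y = z then (1 : ℝ) else 0 := sum_le_sum fun y _ ↦ by
        by_cases hy : y ∈ A₁ ∧ z + z - y ∈ A₁
        · rw [ind_of_mem hy.1, ind_of_mem hy.2, mul_one,
            if_pos (hA (hA₁ hy.1) hz (hA₁ hy.2) (add_sub_cancel y (z + z)))]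
        · have hzero : ind A₁ y * ind A₁ (z + z - y) = 0 := by
            rcases not_and_or.1 hy with hy | hy <;> simp [ind_of_notMem hy]
          rw [hzero]
          split_ifs <;> norm_num
    _ = 1 := by simp

lemma card_mul_pow_le_sum_pow_of_le_neg {D E : Finset G} {F : G → ℝ} {w : ℝ} {p : ℕ}
    (h2 : Function.Injective fun x : G ↦ x + x) (hp : Even p) (hw : 0 ≤ w)
    (hE : ∀ z ∈ E, z + z ∈ D) (hcard : (#D : ℝ) ≤ 2 ^ p * #E)
    (hF : ∀ z ∈ E, F (z + z) ≤ -(w / 2)) :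
    #D * (w / 4) ^ p ≤ ∑ x ∈ D, F x ^ p := by
  classical
  calc #D * (w / 4) ^ p ≤ 2 ^ p * #E * (w / 4) ^ p := by gcongr
    _ = #E * (w / 2) ^ p := by rw [mul_right_comm, ← mul_pow]; ring_nf
    _ ≤ ∑ z ∈ E, F (z + z) ^ p := by
      rw [← nsmul_eq_mul]
      refine card_nsmul_le_sum _ _ _ fun z hz ↦ ?_
      rw [← hp.neg_pow (F (z + z))]
      gcongr
      linarith [hF z hz]
    _ = ∑ x ∈ E.image fun z ↦ z + z, F x ^ p := by
      rw [sum_image fun a _ b _ h ↦ h2 h]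
    _ ≤ ∑ x ∈ D, F x ^ p :=
      sum_le_sum_of_subset_of_nonneg (image_subset_iff.2 hE) fun x _ _ ↦ hp.pow_nonneg _

lemma exists_card_sq_mul_le_sum_sum {B B' D : Finset G} {F : G → ℝ} {c : ℝ} (hF : ∀ x, 0 ≤ F x)
    (hsub : ∀ t ∈ B, ∀ b ∈ D, ∀ b' ∈ D, t - b + b' ∈ B') (hB' : B'.Nonempty)
    (hcard : (#B' : ℝ) ≤ 2 * #B) (hc : 0 ≤ c) (hB : #B * c ≤ ∑ x ∈ B, F x) :
    ∃ t, (#D : ℝ) ^ 2 * (c / 2) ≤ ∑ b ∈ D, ∑ b' ∈ D, F (t + b - b') := by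
  classical
  have htranslate : ∀ b ∈ D, ∀ b' ∈ D, ∑ t ∈ B, F t ≤ ∑ t ∈ B', F (t + b - b') := by
    intro b hb b' hb'
    calc ∑ t ∈ B, F t = ∑ t ∈ B.image fun t ↦ t - b + b', F (t + b - b') := by
          rw [sum_image fun s _ t _ h ↦ by simpa using h]
          exact sum_congr rfl fun t _ ↦ by congr 1; abel
      _ ≤ _ := sum_le_sum_of_subset_of_nonneg
        (image_subset_iff.2 fun t ht ↦ hsub t ht b hb b' hb') fun _ _ _ ↦ hF _
  have hsum : (#D : ℝ) ^ 2 * ∑ t ∈ B, F t ≤ ∑ t ∈ B', ∑ b ∈ D, ∑ b' ∈ D, F (t + b - b') := by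
    calc (#D : ℝ) ^ 2 * ∑ t ∈ B, F t = ∑ _ ∈ D, ∑ _ ∈ D, ∑ t ∈ B, F t := by
          simp only [sum_const, nsmul_eq_mul]; ring
      _ ≤ ∑ b ∈ D, ∑ b' ∈ D, ∑ t ∈ B', F (t + b - b') :=
        sum_le_sum fun _ hb ↦ sum_le_sum fun _ hb' ↦ htranslate _ hb _ hb'
      _ = _ := by
        rw [sum_comm (s := B')]
        exact sum_congr rfl fun b _ ↦ sum_comm
  obtain ⟨t, -, ht⟩ := exists_le_of_sum_le (f := fun _ ↦ (#D : ℝ) ^ 2 * (c / 2)) hB'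
    (le_trans (by
      rw [sum_const, nsmul_eq_mul]
      calc (#B' : ℝ) * (#D ^ 2 * (c / 2)) ≤ 2 * #B * (#D ^ 2 * (c / 2)) := by gcongr
        _ = #D ^ 2 * (#B * c) := by ring
        _ ≤ #D ^ 2 * ∑ t ∈ B, F t := by gcongr) hsum)
  exact ⟨t, ht⟩

lemma card_sq_mul_pow_le_sum_sum_autocorr_pow [Fintype G]
    {Γ Γ' : Finset (AddChar G ℂ)} {A : Finset G} {f : G → ℝ} {ρ₂ κ₂ ρ₄ w : ℝ} {p : ℕ}
    (h2 : Function.Injective fun x : G ↦ x + x) (hΓ : IsDoubling Γ Γ') (hp : Even p) (hw : 0 ≤ w)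
    (hA : A ⊆ bohrSet Γ ρ₂) (hcard : (#(bohrSet Γ ρ₂) : ℝ) ≤ 2 ^ p * #A)
    (hf : ∀ z ∈ A, selfConv f (z + z) ≤ -(w / 2)) (hκ₂ : 0 ≤ ρ₂ + κ₂)
    (hdouble : (#(bohrSet Γ (ρ₂ + κ₂)) : ℝ) ≤ 2 * #(bohrSet Γ ρ₂)) (hρ₄ : ρ₄ + ρ₄ ≤ κ₂) :
    #(bohrSet Γ' ρ₄) ^ 2 * ((w / 4) ^ p / 2) ≤
      ∑ b ∈ bohrSet Γ' ρ₄, ∑ b' ∈ bohrSet Γ' ρ₄, autocorr f (b - b') ^ p := by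
  have hlarge := card_mul_pow_le_sum_pow_of_le_neg (D := bohrSet Γ' ρ₂) h2 hp hw
    (fun z hz ↦ (hΓ ρ₂ z).2 (hA hz)) (by rwa [hΓ.card_bohrSet h2]) hf
  obtain ⟨t, ht⟩ := exists_card_sq_mul_le_sum_sum (B' := bohrSet Γ' (ρ₂ + κ₂))
    (D := bohrSet Γ' ρ₄) (fun x ↦ hp.pow_nonneg (selfConv f x))
    (fun t ht b hb b' hb' ↦ bohrSet_mono (by linarith)
      (add_mem_bohrSet (sub_mem_bohrSet ht hb) hb'))
    (bohrSet_nonempty hκ₂) (by rwa [hΓ.card_bohrSet h2, hΓ.card_bohrSet h2]) (by positivity) hlarge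
  exact ht.trans (sum_sum_selfConv_pow_le _ f p t)

end Moments

section Sifting

/-- The order of the moments that detect the lack of progressions in a set of relative density
about `2 ^ (-L)`: it is even, and `2 ^ (-momentExponent L)` is below the density. -/
def momentExponent (L : ℕ) : ℕ := 2 * (L + 2)

/-- The order of the moments in which the excess of the `p`-th moment outweighs all losses. -/
def siftingExponent (p : ℕ) : ℕ := 20 * (4 * p + 19) + (p + 1)

/-- Sifting a set of relative density `2 ^ (-(L + 1))` leaves a set of relative density at least
`2 ^ (-logSiftedDensity L)`. -/
def logSiftedDensity (L : ℕ) : ℕ := (L + 1) * siftingExponent (momentExponent L) + 2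

lemma pow_siftingExponent_le (p : ℕ) :
    2000 * (65 / 64 : ℝ) ^ siftingExponent p ≤
      (1 + 1 / 8 / 2 - 1 / 100) ^ (20 * (4 * p + 19)) * ((1 / 8) ^ (p + 1) / 16) := by
  have hgrowth : (65 / 64 : ℝ) ^ 20 * 2 ≤ (1 + 1 / 8 / 2 - 1 / 100) ^ 20 := by norm_num
  have hsplit : (2 : ℝ) ^ 11 * 2 ^ (p + 1) = 2 ^ (4 * p + 19) * ((1 / 8) ^ (p + 1) / 16) := by
    rw [show 4 * p + 19 = 4 * (p + 1) + 15 by ring, pow_add 2 (4 * (p + 1)), pow_mul,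
      show (2 : ℝ) ^ (p + 1) = ((2 ^ 4) * (1 / 8)) ^ (p + 1) by norm_num, mul_pow]
    ring
  calc 2000 * (65 / 64 : ℝ) ^ siftingExponent p
      = ((65 / 64) ^ 20) ^ (4 * p + 19) * (2000 * (65 / 64) ^ (p + 1)) := by
        rw [siftingExponent, pow_add, pow_mul]; ring
    _ ≤ ((65 / 64) ^ 20) ^ (4 * p + 19) * (2 ^ 11 * 2 ^ (p + 1)) := by gcongr <;> norm_num
    _ = ((65 / 64) ^ 20) ^ (4 * p + 19) * (2 ^ (4 * p + 19) * ((1 / 8) ^ (p + 1) / 16)) := by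
        rw [hsplit]
    _ = ((65 / 64) ^ 20 * 2) ^ (4 * p + 19) * ((1 / 8) ^ (p + 1) / 16) := by
        rw [mul_pow _ 2, mul_assoc]
    _ ≤ _ := by rw [pow_mul (1 + 1 / 8 / 2 - 1 / 100 : ℝ)]; gcongr

lemma two_mul_one_div_pow_mul_le {α a : ℝ} {L : ℕ} (hL : 1 / 2 ^ (L + 1) ≤ α) (ha : 0 ≤ a) :
    2 * (1 / 2 ^ (L + 9)) * a ≤ α * a / 100 := by
  calc 2 * (1 / 2 ^ (L + 9)) * a = 1 / 2 ^ (L + 1) * a / 128 := by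
        rw [show L + 9 = L + 1 + 8 by ring, pow_add]; ring
    _ ≤ 1 / 2 ^ (L + 1) * a / 100 := by gcongr; norm_num
    _ ≤ α * a / 100 := by gcongr

lemma four_le_mul_mul_of_pow_le {α b : ℝ} {L : ℕ} (hL : 1 / 2 ^ (L + 1) ≤ α)
    (hb : 4 * 4 ^ (L + 1) ≤ b) : 4 ≤ α * (α * b) := by
  have hα : 0 ≤ α := le_trans (by positivity) hL
  calc (4 : ℝ) = 1 / 2 ^ (L + 1) * (1 / 2 ^ (L + 1) * (4 * 4 ^ (L + 1))) := by
        rw [show (4 : ℝ) ^ (L + 1) = 2 ^ (L + 1) * 2 ^ (L + 1) by rw [← mul_pow]; norm_num]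
        field_simp
    _ ≤ α * (α * b) := by gcongr

variable {G : Type*} [AddCommGroup G] [Fintype G] [DecidableEq G] {A D : Finset G}

/-- The differences with at least `c` representations in `A`. -/
noncomputable def popularDifferences (A : Finset G) (c : ℝ) : Finset G :=
  {u | c ≤ autocorr (ind A) u}

lemma mem_popularDifferences {c : ℝ} {u : G} :
    u ∈ popularDifferences A c ↔ c ≤ autocorr (ind A) u := mem_filter_univ u

lemma card_sq_mul_pow_le_sum_sum_autocorr_ind_pow {f : G → ℝ} {w : ℝ} {p : ℕ} (hp : Even p)
    (hp4 : 4 ≤ p) (hw : 0 < w)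
    (hf : ∀ b ∈ D, ∀ b' ∈ D, autocorr f (b - b') + (w - w / 100) ≤ autocorr (ind A) (b - b'))
    (hmoment : #D ^ 2 * ((w / 4) ^ p / 2) ≤ ∑ b ∈ D, ∑ b' ∈ D, autocorr f (b - b') ^ p) :
    2000 * (#D ^ 2 * (65 / 64 * w) ^ siftingExponent p) ≤
      ∑ b ∈ D, ∑ b' ∈ D, autocorr (ind A) (b - b') ^ siftingExponent p := by
  have heven : (#(D ×ˢ D) : ℝ) * (1 / 8) ^ p ≤ ∑ i ∈ D ×ˢ D, (autocorr f (i.1 - i.2) / w) ^ p := by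
    simp only [sum_product, div_pow _ w, ← sum_div]
    rw [le_div_iff₀ (by positivity), card_product]
    refine le_trans ?_ hmoment
    calc ((#D * #D : ℕ) : ℝ) * (1 / 8) ^ p * w ^ p = #D ^ 2 * ((w / 4) ^ p * (1 / 2) ^ p) := by
          rw [mul_assoc, ← mul_pow, ← mul_pow]; push_cast; ring
      _ ≤ #D ^ 2 * ((w / 4) ^ p * (1 / 2)) := by
          gcongr
          exact pow_le_of_le_one (by norm_num) (by norm_num) (by omega)
      _ = _ := by ring
  have hodd : 0 ≤ ∑ i ∈ D ×ˢ D, (autocorr f (i.1 - i.2) / w) ^ (p + 1) := by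
    simp only [sum_product, div_pow, ← sum_div]
    exact div_nonneg (sum_sum_autocorr_pow_nonneg D f _) (by positivity)
  have hunbalanced := le_sum_pow_of_le_sum_pow (Q := D ×ˢ D) (20 * (4 * p + 19))
    (Y := fun i ↦ autocorr (ind A) (i.1 - i.2) / w) (ε := 1 / 8) (τ := 1 / 100) hp hp4
    (by norm_num) (by norm_num) (fun i _ ↦ div_nonneg (autocorr_ind_nonneg A _) hw.le)
    (fun i hi ↦ by
      rw [le_div_iff₀ hw]
      have hi := hf _ (mem_product.1 hi).1 _ (mem_product.1 hi).2
      have hcancel : autocorr f (i.1 - i.2) / w * w = autocorr f (i.1 - i.2) := by field_simp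
      linarith) hodd heven
  rw [← siftingExponent, sum_product] at hunbalanced
  simp only [div_pow _ w, ← sum_div] at hunbalanced
  rw [le_div_iff₀ (by positivity), card_product] at hunbalanced
  refine le_trans ?_ hunbalanced
  calc 2000 * (#D ^ 2 * (65 / 64 * w) ^ siftingExponent p)
      = #D ^ 2 * w ^ siftingExponent p * (2000 * (65 / 64) ^ siftingExponent p) := by
        rw [mul_pow]; ring
    _ ≤ #D ^ 2 * w ^ siftingExponent p *
          ((1 + 1 / 8 / 2 - 1 / 100) ^ (20 * (4 * p + 19)) * ((1 / 8) ^ (p + 1) / 16)) :=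
        mul_le_mul_of_nonneg_left (pow_siftingExponent_le p) (by positivity)
    _ = _ := by
        generalize (1 + 1 / 8 / 2 - 1 / 100 : ℝ) ^ (20 * (4 * p + 19)) = c
        push_cast
        ring

lemma exists_sifted_of_le_moment {α : ℝ} {L : ℕ} (hA : A.Nonempty) (hD : D.Nonempty)
    (hL : 1 / 2 ^ (L + 1) ≤ α)
    (hmoment : 2000 * (#D ^ 2 * (65 / 64 * (α * #A)) ^ siftingExponent (momentExponent L)) ≤
      ∑ b ∈ D, ∑ b' ∈ D, autocorr (ind A) (b - b') ^ siftingExponent (momentExponent L)) :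
    ∃ A' ⊆ D, A'.Nonempty ∧ (#D : ℝ) ≤ 2 ^ logSiftedDensity L * #A' ∧
      (1 - 1 / 1000) * (#A' : ℝ) ^ 2 ≤
        ∑ a ∈ A', ∑ a' ∈ A', ind (popularDifferences A (65 / 64 * (α * #A))) (a - a') := by
  have hα : 0 < α := lt_of_lt_of_le (by positivity) hL
  have : (0 : ℝ) < #A := by exact_mod_cast hA.card_pos
  have hD0 : (0 : ℝ) < #D := by exact_mod_cast hD.card_pos
  set q := siftingExponent (momentExponent L) with hq
  have hgrow : 1 ≤ (65 / 64 : ℝ) ^ q := one_le_pow₀ (by norm_num)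
  obtain ⟨A', hA'D, hA', hcard, hpopular⟩ := exists_sifted (q := q) (η := α ^ q / 4)
    (δ := 1 / 1000) (c := 65 / 64 * (α * #A)) (by positivity) (by positivity) (by norm_num)
    (fun u hu ↦ (not_le.1 fun h ↦ hu (mem_popularDifferences.2 h)).le) (by linarith)
    (lt_of_lt_of_le (by
      rw [mul_pow (65 / 64 : ℝ)]
      calc 2 * (α ^ q / 4 * #D ^ 2 * #A ^ q) = #D ^ 2 * (α * #A) ^ q * (1 / 2) := by
            rw [mul_pow]; ring
        _ < #D ^ 2 * (α * #A) ^ q * (2000 * (65 / 64) ^ q) := by gcongr; linarith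
        _ = _ := by ring) hmoment)
  refine ⟨A', hA'D, hA', ?_, hpopular⟩
  have hdensity : 1 ≤ (2 : ℝ) ^ logSiftedDensity L * (α ^ q / 4) := by
    calc (1 : ℝ) = (2 ^ (L + 1) * (1 / 2 ^ (L + 1))) ^ q := by
          rw [mul_one_div_cancel (by positivity), one_pow]
      _ ≤ (2 ^ (L + 1) * α) ^ q := by gcongr
      _ = _ := by
        rw [logSiftedDensity, ← hq, pow_add _ ((L + 1) * q), pow_mul, mul_pow]; ring
  calc (#D : ℝ) ≤ 2 ^ logSiftedDensity L * (α ^ q / 4) * #D := le_mul_of_one_le_left hD0.le hdensity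
    _ = 2 ^ logSiftedDensity L * (α ^ q / 4 * #D) := mul_assoc _ _ _
    _ ≤ _ := by gcongr

variable {Γ Γ' : Finset (AddChar G ℂ)} {ρ κ ρ₂ κ₂ ρ₄ α : ℝ} {L : ℕ}

lemma selfConv_balanced_add_self_le {z : G} (hA : ThreeAPFree (A : Set G))
    (hL : 1 / 2 ^ (L + 1) ≤ α) (hα : α * #(bohrSet Γ ρ) = #(A ∩ bohrSet Γ ρ))
    (hlarge : 4 * 4 ^ (L + 1) ≤ (#(bohrSet Γ ρ) : ℝ)) (hκ : 0 ≤ κ)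
    (hreg : IsRegular Γ ρ κ (1 / 2 ^ (L + 9))) (hz : z ∈ A) (hzz : z + z ∈ bohrSet Γ κ) :
    selfConv (balanced (A ∩ bohrSet Γ ρ) (bohrSet Γ ρ) α) (z + z) ≤
      -(α * #(A ∩ bohrSet Γ ρ) / 2) := by
  have hcount := selfConv_ind_add_self_le_one hA (inter_subset_left (s₂ := bohrSet Γ ρ)) hz
  have hbalanced := selfConv_balanced_le inter_subset_right (by positivity) hκ hreg
    (le_trans (by positivity) hL) hα hzz
  linarith [two_mul_one_div_pow_mul_le hL (Nat.cast_nonneg #(A ∩ bohrSet Γ ρ)),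
    hα ▸ four_le_mul_mul_of_pow_le hL hlarge]

lemma exists_sifted_bohrSet (h2 : Function.Injective fun x : G ↦ x + x)
    (hA : ThreeAPFree (A : Set G)) (hΓ : IsDoubling Γ Γ') (hL : 1 / 2 ^ (L + 1) ≤ α)
    (hα : α * #(bohrSet Γ ρ) = #(A ∩ bohrSet Γ ρ))
    (hlarge : 4 * 4 ^ (L + 1) ≤ (#(bohrSet Γ ρ) : ℝ)) (hreg : IsRegular Γ ρ κ (1 / 2 ^ (L + 9)))
    (hA₂ : 1 / 2 ^ (L + 1) * (#(bohrSet Γ ρ₂) : ℝ) ≤ #(A ∩ bohrSet Γ ρ₂)) (hρ₂ : 0 ≤ ρ₂)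
    (hρ₂κ : ρ₂ + ρ₂ ≤ κ) (hdouble : (#(bohrSet Γ (ρ₂ + κ₂)) : ℝ) ≤ 2 * #(bohrSet Γ ρ₂))
    (hρ₄ : 0 ≤ ρ₄) (hρ₄κ₂ : ρ₄ + ρ₄ ≤ κ₂) (hρ₄κ : ρ₄ + ρ₄ + (ρ₄ + ρ₄) ≤ κ) :
    ∃ A' ⊆ bohrSet Γ' ρ₄, A'.Nonempty ∧
      (#(bohrSet Γ' ρ₄) : ℝ) ≤ 2 ^ logSiftedDensity L * #A' ∧
      (1 - 1 / 1000) * (#A' : ℝ) ^ 2 ≤ ∑ a ∈ A', ∑ a' ∈ A',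
        ind (popularDifferences (A ∩ bohrSet Γ ρ) (65 / 64 * (α * #(A ∩ bohrSet Γ ρ))))
          (a - a') := by
  have hα0 : 0 ≤ α := le_trans (by positivity) hL
  have hw := hα ▸ four_le_mul_mul_of_pow_le hL hlarge
  have hp : Even (momentExponent L) := even_two_mul _
  have hcard : (#(bohrSet Γ ρ₂) : ℝ) ≤ 2 ^ momentExponent L * #(A ∩ bohrSet Γ ρ₂) := by
    calc (#(bohrSet Γ ρ₂) : ℝ) = 2 ^ (L + 1) * (1 / 2 ^ (L + 1) * #(bohrSet Γ ρ₂)) := by field_simp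
      _ ≤ 2 ^ momentExponent L * #(A ∩ bohrSet Γ ρ₂) := by
        gcongr
        · norm_num
        · rw [momentExponent]; lia
  have hmoment := card_sq_mul_pow_le_sum_sum_autocorr_pow (ρ₄ := ρ₄) h2 hΓ hp
    (zero_le_four.trans hw) inter_subset_right hcard (fun z hz ↦ selfConv_balanced_add_self_le hA hL
      hα hlarge (by linarith) hreg (mem_inter.1 hz).1
      (bohrSet_mono hρ₂κ (add_mem_bohrSet (mem_inter.1 hz).2 (mem_inter.1 hz).2)))
    (by linarith) hdouble hρ₄κ₂
  refine exists_sifted_of_le_moment (card_pos.1 ?_) (bohrSet_nonempty hρ₄) hL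
    (card_sq_mul_pow_le_sum_sum_autocorr_ind_pow hp (by rw [momentExponent]; lia)
      (by linarith) (fun b hb b' hb' ↦ ?_) hmoment)
  · rw [pos_iff_ne_zero]
    rintro hzero
    norm_num [hzero] at hw
  · have hbalanced := autocorr_balanced_le inter_subset_right (by positivity) (by linarith) hreg hα0
      hα (bohrSet_mono hρ₄κ (hΓ.bohrSet_subset h2 _ (sub_mem_bohrSet hb hb')))
    linarith [two_mul_one_div_pow_mul_le hL (Nat.cast_nonneg #(A ∩ bohrSet Γ ρ))]

end Sifting

open scoped Pointwise

/-! ### The density increment -/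

section DensityOn

variable {G : Type*} [AddCommGroup G] [DecidableEq G] {A A' B B' B'' C : Finset G} {x : G} {α : ℝ}

/-- The relative density of `A` on the translate `x + B`, with value `0` if `B` is empty. -/
noncomputable def densityOn (A B : Finset G) (x : G) : ℝ := (∑ v ∈ B, ind A (x + v)) / #B

lemma densityOn_mul_card : densityOn A B x * #B = ∑ v ∈ B, ind A (x + v) := by
  obtain rfl | hB := B.eq_empty_or_nonempty
  · simp
  · exact div_mul_cancel₀ _ (Nat.cast_ne_zero.2 hB.card_ne_zero)

lemma densityOn_le_one : densityOn A B x ≤ 1 :=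
  div_le_one_of_le₀ (by simpa using sum_le_card_nsmul B _ 1 fun v _ ↦ ind_le_one A (x + v))
    (Nat.cast_nonneg _)

lemma densityOn_mono (h : A ⊆ A') : densityOn A B x ≤ densityOn A' B x := by
  refine div_le_div_of_nonneg_right (sum_le_sum fun v _ ↦ ?_) (Nat.cast_nonneg _)
  by_cases hv : x + v ∈ A
  · rw [ind_of_mem hv, ind_of_mem (h hv)]
  · rw [ind_of_notMem hv]; exact ind_nonneg _ _

lemma densityOn_neg_vadd (A B : Finset G) (x y : G) :
    densityOn (-x +ᵥ A) B y = densityOn A B (x + y) := by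
  simp [densityOn, ind, mem_neg_vadd_finset_iff, add_assoc]

lemma card_inter_eq_densityOn_mul_card : (#(A ∩ B) : ℝ) = densityOn A B 0 * #B := by
  simp [densityOn_mul_card, ind, inter_comm]

lemma sum_ind_le_sum_densityOn (hB' : B'.Nonempty) (hsub : ∀ a ∈ B, ∀ b ∈ B', a - b ∈ C) :
    ∑ v ∈ B, ind A (x + v) ≤ ∑ t ∈ C, densityOn A B' (x + t) := by
  have htranslate : ∀ b ∈ B', ∑ v ∈ B, ind A (x + v) ≤ ∑ t ∈ C, ind A (x + t + b) := fun b hb ↦ by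
    calc ∑ v ∈ B, ind A (x + v) = ∑ t ∈ B.image (· - b), ind A (x + t + b) := by
          rw [sum_image fun s _ t _ h ↦ by simpa using h]
          simp [add_assoc]
      _ ≤ _ := sum_le_sum_of_subset_of_nonneg (image_subset_iff.2 fun a ha ↦ hsub a ha b hb)
        fun _ _ _ ↦ ind_nonneg _ _
  simp only [densityOn, ← sum_div]
  rw [le_div_iff₀ (by exact_mod_cast hB'.card_pos), sum_comm, mul_comm, ← nsmul_eq_mul]
  exact card_nsmul_le_sum _ _ _ htranslate

lemma exists_two_mul_le_densityOn_add {δ : ℝ} (hα0 : 0 ≤ α) (hδ : 0 ≤ δ)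
    (hC : C.Nonempty) (hB' : B'.Nonempty) (hB'' : B''.Nonempty)
    (hsub' : ∀ a ∈ B, ∀ b ∈ B', a - b ∈ C) (hsub'' : ∀ a ∈ B, ∀ b ∈ B'', a - b ∈ C)
    (hcard : (#C : ℝ) ≤ (1 + δ) * #B) (hα : α ≤ densityOn A B x) :
    ∃ t, 2 * α ≤ (1 + δ) * (densityOn A B' (x + t) + densityOn A B'' (x + t)) := by
  have hB : α * #B ≤ ∑ v ∈ B, ind A (x + v) := by rw [← densityOn_mul_card]; gcongr
  obtain ⟨t, -, ht⟩ := exists_le_of_sum_le (f := fun _ ↦ 2 * α)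
    (g := fun t ↦ (1 + δ) * (densityOn A B' (x + t) + densityOn A B'' (x + t))) hC (by
      rw [sum_const, nsmul_eq_mul, ← mul_sum, sum_add_distrib]
      calc #C * (2 * α) ≤ (1 + δ) * #B * (2 * α) := by gcongr
        _ = (1 + δ) * (α * #B + α * #B) := by ring
        _ ≤ _ := by
          gcongr <;> exact hB.trans (sum_ind_le_sum_densityOn ‹_› ‹_›))
  exact ⟨t, ht⟩

variable [Fintype G]

lemma sum_autocorr_ind_eq (A B : Finset G) (u : G) :
    ∑ v ∈ B, autocorr (ind A) (u + v) = ∑ y ∈ A, ∑ v ∈ B, ind A (y + u + v) := by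
  simp only [autocorr, ← add_assoc]
  rw [sum_comm, ← sum_ind_mul A]
  exact sum_congr rfl fun y _ ↦ (mul_sum _ _ _).symm

lemma exists_le_densityOn_of_popularDifferences {β c : ℝ} {u : G} (hA : A.Nonempty)
    (hB : B.Nonempty) (hc : 0 ≤ c)
    (hu : β * #B ≤ ∑ v ∈ B, ind (popularDifferences A c) (u + v)) :
    ∃ x, c * β / #A ≤ densityOn A B x := by
  have : (0 : ℝ) < #A := by exact_mod_cast hA.card_pos
  have hpopular (x : G) : c * ind (popularDifferences A c) x ≤ autocorr (ind A) x := by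
    by_cases hx : x ∈ popularDifferences A c
    · rw [ind_of_mem hx, mul_one]; exact mem_popularDifferences.1 hx
    · rw [ind_of_notMem hx, mul_zero]; exact autocorr_ind_nonneg A x
  obtain ⟨y, -, hy⟩ := exists_le_of_sum_le (f := fun _ ↦ c * β / #A * #B) hA (by
    calc ∑ _ ∈ A, c * β / #A * #B = c * (β * #B) := by
          rw [sum_const, nsmul_eq_mul]; field_simp
      _ ≤ c * ∑ v ∈ B, ind (popularDifferences A c) (u + v) := by gcongr
      _ ≤ ∑ v ∈ B, autocorr (ind A) (u + v) := by
          rw [mul_sum]; exact sum_le_sum fun v _ ↦ hpopular (u + v)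
      _ = ∑ y ∈ A, ∑ v ∈ B, ind A (y + u + v) := sum_autocorr_ind_eq A B u)
  exact ⟨y + u, (le_div_iff₀ (by exact_mod_cast hB.card_pos)).2 hy⟩

end DensityOn

section Increment

variable {G : Type*} [AddCommGroup G] [Fintype G] [DecidableEq G] {A : Finset G}
  {Γ : Finset (AddChar G ℂ)} {ρ κ ρ₂ κ₂ α : ℝ} {d D L : ℕ}

lemma exists_bohrSet_le_densityOn (h2 : Function.Injective fun x : G ↦ x + x)
    (hA : ThreeAPFree (A : Set G)) (hD : #Γ ≤ D) (hD0 : D ≠ 0) (hL : 1 / 2 ^ (L + 1) ≤ α)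
    (hα : α * #(bohrSet Γ ρ) = #(A ∩ bohrSet Γ ρ))
    (hlarge : 4 * 4 ^ (L + 1) ≤ (#(bohrSet Γ ρ) : ℝ)) (hreg : IsRegular Γ ρ κ (1 / 2 ^ (L + 9)))
    (hA₂ : 1 / 2 ^ (L + 1) * (#(bohrSet Γ ρ₂) : ℝ) ≤ #(A ∩ bohrSet Γ ρ₂)) (hρ₂ : 0 ≤ ρ₂)
    (hρ₂κ : ρ₂ + ρ₂ ≤ κ) (hdouble : (#(bohrSet Γ (ρ₂ + κ₂)) : ℝ) ≤ 2 * #(bohrSet Γ ρ₂))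
    (hκ₂ : 0 < κ₂) (hκ₂κ : κ₂ ≤ κ) (hκ₂2 : κ₂ ≤ 2) :
    ∃ Γ₂, #Γ₂ ≤ #Γ + rankGain (logSiftedDensity L) ∧ ∀ ρ', 0 ≤ ρ' →
      ρ' ≤ κ₂ / (112 * D) / radiusLoss D (logSiftedDensity L) →
        ∃ x, 1.011 * α ≤ densityOn (A ∩ bohrSet Γ ρ) (bohrSet Γ₂ ρ') x := by
  have hD1 : (1 : ℝ) ≤ D := by exact_mod_cast Nat.one_le_iff_ne_zero.2 hD0
  obtain ⟨Γ', hΓ'card, hΓ'⟩ := exists_isDoubling h2 Γ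
  obtain ⟨ρ₄, hκ₄ρ₄, hρ₄, hreg₄⟩ := exists_isRegular (hΓ'card.trans hD) hD0 one_ne_zero
    (by positivity : 0 < κ₂ / 4)
  have hκ₄ : κ₂ / 4 / (28 * D * (1 : ℕ)) = κ₂ / (112 * D) := by
    rw [div_div]; congr 1; push_cast; ring
  rw [hκ₄] at hκ₄ρ₄ hreg₄
  have hκ₄0 : 0 < κ₂ / (112 * D) := by positivity
  obtain ⟨A', hA'sub, hA'ne, hA'card, hpopular⟩ := exists_sifted_bohrSet (ρ₄ := ρ₄) h2 hA hΓ' hL hα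
    hlarge hreg hA₂ hρ₂ hρ₂κ hdouble (by linarith) (by linarith) (by linarith)
  have hdouble₄ := hreg₄.card_add_le hκ₄0.le (by positivity)
  obtain ⟨Λ, hΛ, hincrement⟩ := exists_bohrSet_mul_card_le_sum_ind (hΓ'card.trans hD) hD0 hκ₄0
    ((div_le_self hκ₂.le (by linarith)).trans hκ₂2)
    (hdouble₄.trans_eq (by norm_num)) hA'ne hA'sub hA'card hpopular
  refine ⟨Γ' ∪ Λ, (card_union_le _ _).trans (by lia), fun ρ' hρ'0 hρ' ↦ ?_⟩
  obtain ⟨u, hu⟩ := hincrement ρ' hρ'0 hρ'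
  have hα0 : 0 < α := lt_of_lt_of_le (by positivity) hL
  have hA₁ : (0 : ℝ) < #(A ∩ bohrSet Γ ρ) :=
    hα ▸ mul_pos hα0 (lt_of_lt_of_le (by positivity) hlarge)
  obtain ⟨x, hx⟩ := exists_le_densityOn_of_popularDifferences
    (card_pos.1 (by exact_mod_cast hA₁)) (bohrSet_nonempty hρ'0) (by positivity) hu
  refine ⟨x, le_trans ((le_div_iff₀ hA₁).2 ?_) hx⟩
  linarith [mul_pos hα0 hA₁]

/-- `A` has relative density at least `α` on some translate of a Bohr set of rank at most `d`,
whose cardinality grows by a factor of at most `1 + 1 / 500` when its radius grows by `κ`. -/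
def HasDensityOnBohrSet (A : Finset G) (α : ℝ) (d : ℕ) (κ : ℝ) : Prop :=
  ∃ (Γ : Finset (AddChar G ℂ)) (ρ : ℝ) (x : G), #Γ ≤ d ∧ 0 ≤ ρ ∧
    #(bohrSet Γ (ρ + κ)) ≤ (1 + 1 / 500) * (#(bohrSet Γ ρ) : ℝ) ∧
    α ≤ densityOn A (bohrSet Γ ρ) x

lemma HasDensityOnBohrSet.mono {α' κ' : ℝ} {d' : ℕ} (h : HasDensityOnBohrSet A α d κ)
    (hα : α' ≤ α) (hd : d ≤ d') (hκ : κ' ≤ κ) : HasDensityOnBohrSet A α' d' κ' := by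
  obtain ⟨Γ, ρ, x, hΓ, hρ, hreg, hdens⟩ := h
  exact ⟨Γ, ρ, x, hΓ.trans hd, hρ, (card_bohrSet_mono (by gcongr)).trans hreg, hα.trans hdens⟩

lemma IsRegular.hasDensityOnBohrSet {η : ℝ} {x : G} (hreg : IsRegular Γ ρ κ η) (hη0 : 0 ≤ η)
    (hη : η ≤ 1 / 500) (hd : #Γ ≤ d) (hρ : 0 ≤ ρ) (hκ : 0 ≤ κ)
    (hα : α ≤ densityOn A (bohrSet Γ ρ) x) : HasDensityOnBohrSet A α d κ :=
  ⟨Γ, ρ, x, hd, hρ, (hreg.card_add_le hκ hη0).trans (by gcongr), hα⟩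

lemma hasDensityOnBohrSet_of_le_densityOn {x : G} (h2 : Function.Injective fun x : G ↦ x + x)
    (hA : ThreeAPFree (A : Set G)) (hd : #Γ ≤ d) (hD : d + rankGain (logSiftedDensity L) ≤ D)
    (hL : 1 / 2 ^ (L + 1) ≤ α) (hlarge : 4 * 4 ^ (L + 1) ≤ (#(bohrSet Γ ρ) : ℝ))
    (hreg : IsRegular Γ ρ κ (1 / 2 ^ (L + 9))) (hreg₂ : IsRegular Γ ρ₂ κ₂ (1 / 500)) (hρ₂ : 0 ≤ ρ₂)
    (hρ₂κ : ρ₂ + ρ₂ ≤ κ) (hκ₂ : 0 < κ₂) (hκ₂κ : κ₂ ≤ κ) (hκ₂2 : κ₂ ≤ 2)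
    (hα : α ≤ densityOn A (bohrSet Γ ρ) x) (hα₂ : α ≤ densityOn A (bohrSet Γ ρ₂) x) :
    HasDensityOnBohrSet A (1.011 * α) (d + rankGain (logSiftedDensity L))
      (κ₂ / (112 * D) / radiusLoss D (logSiftedDensity L) / (28 * D * 500)) := by
  have hD0 : D ≠ 0 := by have := rankGain_pos (logSiftedDensity L); lia
  have hcard (B : Finset G) : (#((-x +ᵥ A) ∩ B) : ℝ) = densityOn A B x * #B := by
    rw [card_inter_eq_densityOn_mul_card, densityOn_neg_vadd, add_zero]
  obtain ⟨Γ₂, hΓ₂, hincrement⟩ := exists_bohrSet_le_densityOn (A := -x +ᵥ A) h2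
    (by rw [coe_vadd_finset]; exact hA.vadd_set) (by lia : #Γ ≤ D) hD0 (hL.trans hα)
    (hcard _).symm hlarge hreg (by rw [hcard]; gcongr; exact hL.trans hα₂) hρ₂ hρ₂κ
    ((hreg₂.card_add_le hκ₂.le (by norm_num)).trans (by gcongr; norm_num)) hκ₂ hκ₂κ hκ₂2
  have hσ : 0 < κ₂ / (112 * D) / radiusLoss D (logSiftedDensity L) := by
    have := radiusLoss_pos hD0 (logSiftedDensity L)
    positivity
  obtain ⟨ρ', hκ'ρ', hρ', hreg'⟩ := exists_isRegular (by lia : #Γ₂ ≤ D) hD0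
    (by norm_num : 500 ≠ 0) hσ
  rw [Nat.cast_ofNat] at hκ'ρ' hreg'
  have hκ' : 0 ≤ κ₂ / (112 * D) / radiusLoss D (logSiftedDensity L) / (28 * D * 500) := by
    positivity
  obtain ⟨y, hy⟩ := hincrement ρ' (hκ'.trans hκ'ρ') hρ'
  refine hreg'.hasDensityOnBohrSet (x := x + y) (by norm_num) le_rfl (by lia) (hκ'.trans hκ'ρ')
    hκ' ?_
  calc 1.011 * α ≤ 1.011 * densityOn A (bohrSet Γ ρ) x := by gcongr
    _ ≤ densityOn (-x +ᵥ A) (bohrSet Γ₂ ρ') y := hy.trans (densityOn_mono inter_subset_left)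
    _ = densityOn A (bohrSet Γ₂ ρ') (x + y) := densityOn_neg_vadd A _ x y

/-- The factor by which the radius shrinks in one density increment, when all ranks are at most
`D` and all densities are at least `2 ^ (-L)`. -/
@[irreducible] def incrementLoss (L D : ℕ) : ℕ :=
  28 * D * 2 ^ (L + 9) * (2 * (28 * D * 500)) * (112 * D) * radiusLoss D (logSiftedDensity L) *
    (28 * D * 500)

lemma incrementLoss_pos (L : ℕ) (hD : D ≠ 0) : 0 < incrementLoss L D := by
  have := radiusLoss_pos hD (logSiftedDensity L)
  rw [incrementLoss]
  positivity

lemma div_incrementLoss (κ : ℝ) (L D : ℕ) :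
    κ / incrementLoss L D = κ / (28 * D * (2 ^ (L + 9) : ℕ)) / 2 / (28 * D * (500 : ℕ)) /
      (112 * D) / radiusLoss D (logSiftedDensity L) / (28 * D * 500) := by
  simp only [incrementLoss, div_div]
  push_cast
  ring_nf

lemma div_incrementLoss_le (hκ : 0 ≤ κ) (L : ℕ) (hD : D ≠ 0) :
    κ / incrementLoss L D ≤ κ / (28 * D * (2 ^ (L + 9) : ℕ)) / 2 / (28 * D * (500 : ℕ)) := by
  have hD1 : (1 : ℝ) ≤ D := by exact_mod_cast Nat.one_le_iff_ne_zero.2 hD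
  have hloss : (1 : ℝ) ≤ radiusLoss D (logSiftedDensity L) := by
    exact_mod_cast radiusLoss_pos hD (logSiftedDensity L)
  rw [div_incrementLoss]
  refine (div_le_self (by positivity) (by linarith)).trans ?_
  exact (div_le_self (by positivity) hloss).trans (div_le_self (by positivity) (by linarith))

lemma HasDensityOnBohrSet.increment (h2 : Function.Injective fun x : G ↦ x + x)
    (hA : ThreeAPFree (A : Set G)) (hD : d + rankGain (logSiftedDensity L) ≤ D) (hκ : 0 < κ)
    (hκ2 : κ ≤ 2) (hL : 1 / 2 ^ L ≤ α)
    (hlarge : ∀ Γ : Finset (AddChar G ℂ), #Γ ≤ d →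
      4 * 4 ^ (L + 1) ≤ (#(bohrSet Γ (κ / incrementLoss L D)) : ℝ))
    (h : HasDensityOnBohrSet A α d κ) :
    HasDensityOnBohrSet A ((1 + 1 / 500) * α) (d + rankGain (logSiftedDensity L))
      (κ / incrementLoss L D) := by
  have hα0 : 0 < α := lt_of_lt_of_le (by positivity) hL
  have hD0 : D ≠ 0 := by have := rankGain_pos (logSiftedDensity L); lia
  obtain ⟨Γ, ρ, x, hd, hρ, hreg, hα⟩ := h
  obtain ⟨ρ₁, hκρ₁, hρ₁, hreg₁⟩ := exists_isRegular (by lia : #Γ ≤ D) hD0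
    (pow_ne_zero (L + 9) two_ne_zero) hκ
  set κ₁ := κ / (28 * D * (2 ^ (L + 9) : ℕ)) with hκ₁
  have hκ₁0 : 0 < κ₁ := by positivity
  obtain ⟨ρ₂, hκρ₂, hρ₂, hreg₂⟩ := exists_isRegular (by lia : #Γ ≤ D) hD0
    (by norm_num : 500 ≠ 0) (half_pos hκ₁0)
  set κ₂ := κ₁ / 2 / (28 * D * (500 : ℕ)) with hκ₂
  have hκ₂0 : 0 < κ₂ := by positivity
  have hloss := div_incrementLoss_le (D := D) hκ.le L hD0
  rw [← hκ₁, ← hκ₂] at hloss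
  push_cast at hreg₁ hreg₂
  obtain ⟨t, ht⟩ := exists_two_mul_le_densityOn_add (C := bohrSet Γ (ρ + κ)) hα0.le (by norm_num)
    (bohrSet_nonempty (by linarith)) (bohrSet_nonempty (ρ := ρ₁) (by linarith))
    (bohrSet_nonempty (ρ := ρ₂) (by linarith))
    (fun a ha b hb ↦ bohrSet_mono (by linarith) (sub_mem_bohrSet ha hb))
    (fun a ha b hb ↦ bohrSet_mono (by linarith) (sub_mem_bohrSet ha hb)) hreg hα
  by_cases hα₁ : (1 + 1 / 500) * α ≤ densityOn A (bohrSet Γ ρ₁) (x + t)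
  · exact (hreg₁.hasDensityOnBohrSet (by positivity) (one_div_le_one_div_of_le (by norm_num) (by
      rw [pow_add]; linarith [one_le_pow₀ (one_le_two (α := ℝ)) (n := L)])) (by lia) (by linarith)
      hκ₁0.le hα₁).mono le_rfl (Nat.le_add_right d _) (by linarith)
  by_cases hα₂ : (1 + 1 / 500) * α ≤ densityOn A (bohrSet Γ ρ₂) (x + t)
  · exact (hreg₂.hasDensityOnBohrSet (by norm_num) le_rfl hd (by linarith) hκ₂0.le hα₂).mono le_rfl
      (Nat.le_add_right d _) hloss
  rw [div_incrementLoss]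
  refine (hasDensityOnBohrSet_of_le_densityOn (x := x + t) (α := 0.994 * α) h2 hA hd hD ?_
    ((hlarge Γ hd).trans (card_bohrSet_mono (by linarith))) hreg₁ hreg₂ (by linarith) (by linarith)
    hκ₂0 (by linarith) (by linarith) (by linarith) (by linarith)).mono (by linarith) le_rfl le_rfl
  calc (1 : ℝ) / 2 ^ (L + 1) = 1 / 2 ^ L / 2 := by rw [pow_succ, div_div]
    _ ≤ 0.994 * α := by linarith

end Increment

/-! ### Iterating the density increment -/

section Iteration

variable {G : Type*} [AddCommGroup G] [Fintype G] {L D J j : ℕ}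

lemma incrementLoss_le_two_pow (L D : ℕ) :
    incrementLoss L D ≤ 2 ^ (L + 76 + walkLength (logSiftedDensity L) +
      rankGain (logSiftedDensity L) + logSiftedDensity L + 6 * D) := by
  rw [incrementLoss, radiusLoss]
  generalize logSiftedDensity L = h
  have hD : D ≤ 2 ^ D := Nat.lt_two_pow_self.le
  have hwalk : walkLength h ≤ 2 ^ walkLength h := Nat.lt_two_pow_self.le
  have hrank : rankGain h ≤ 2 ^ rankGain h := Nat.lt_two_pow_self.le
  calc 28 * D * 2 ^ (L + 9) * (2 * (28 * D * 500)) * (112 * D) *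
        (1568 * walkLength h * D ^ 2 * rankGain h * 2 ^ (h + 15)) * (28 * D * 500)
      = 28 * 2 ^ (L + 9) * 28000 * 112 * (1568 * walkLength h * rankGain h * 2 ^ (h + 15)) *
        14000 * D ^ 6 := by ring
    _ ≤ 2 ^ 5 * 2 ^ (L + 9) * 2 ^ 15 * 2 ^ 7 *
        (2 ^ 11 * 2 ^ walkLength h * 2 ^ rankGain h * 2 ^ (h + 15)) * 2 ^ 14 * (2 ^ D) ^ 6 := by
      gcongr <;> norm_num
    _ = 2 ^ (L + 76 + walkLength h + rankGain h + h + 6 * D) := by ring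

lemma four_mul_four_pow_le_card_bohrSet {Γ : Finset (AddChar G ℂ)} {K e : ℕ} (hK0 : 0 < K)
    (hK : K ≤ 2 ^ e) (hΓ : #Γ ≤ D)
    (hG : 2 ^ (2 * L + 4 + 7 * (D * (e * J + 1))) ≤ Fintype.card G) :
    4 * 4 ^ (L + 1) ≤ (#(bohrSet Γ (1 / K ^ J)) : ℝ) := by
  have hradius : (2 : ℝ) / 2 ^ (e * J + 1) ≤ 1 / K ^ J := by
    rw [pow_succ', ← div_div, div_self two_ne_zero, pow_mul]
    gcongr
    exact_mod_cast hK
  refine le_trans ?_ (card_bohrSet_mono hradius)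
  have hcard : 2 ^ (2 * L + 4) ≤ #(bohrSet Γ (2 / 2 ^ (e * J + 1))) := by
    refine le_of_mul_le_mul_left ?_ (by positivity : 0 < (2 ^ 7) ^ (D * (e * J + 1)))
    calc (2 ^ 7) ^ (D * (e * J + 1)) * 2 ^ (2 * L + 4)
        = 2 ^ (2 * L + 4 + 7 * (D * (e * J + 1))) := by rw [← pow_mul, ← pow_add, add_comm]
      _ ≤ 81 ^ (D * (e * J + 1)) * #(bohrSet Γ (2 / 2 ^ (e * J + 1))) :=
        hG.trans (card_le_pow_mul_card_bohrSet hΓ (e * J + 1))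
      _ ≤ (2 ^ 7) ^ (D * (e * J + 1)) * #(bohrSet Γ (2 / 2 ^ (e * J + 1))) := by
        gcongr
        norm_num
  calc (4 : ℝ) * 4 ^ (L + 1) = 2 ^ (2 * L + 4) := by
        rw [← pow_succ', (by norm_num : (4 : ℝ) = 2 ^ 2), ← pow_mul]
        ring
    _ ≤ #(bohrSet Γ (2 / 2 ^ (e * J + 1))) := by exact_mod_cast hcard

variable [DecidableEq G] {A : Finset G}

lemma hasDensityOnBohrSet_zero (κ : ℝ) (hA : Fintype.card G ≤ 2 ^ L * #A) :
    HasDensityOnBohrSet A (1 / 2 ^ L) 0 κ := by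
  have hbohr (ρ : ℝ) : bohrSet (∅ : Finset (AddChar G ℂ)) ρ = univ := by ext; simp [mem_bohrSet]
  refine ⟨∅, 0, 0, by simp, le_rfl, ?_, ?_⟩
  · rw [hbohr, hbohr]
    linarith [(#(univ : Finset G)).cast_nonneg (α := ℝ)]
  · have hcard : (0 : ℝ) < Fintype.card G := by exact_mod_cast Fintype.card_pos
    rw [hbohr, ← mul_le_mul_iff_left₀ (by simpa using hcard : (0 : ℝ) < #(univ : Finset G)),
      ← card_inter_eq_densityOn_mul_card, inter_univ, card_univ, one_div_mul_eq_div,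
      div_le_iff₀' (by positivity)]
    exact_mod_cast hA

lemma HasDensityOnBohrSet.iterate (h2 : Function.Injective fun x : G ↦ x + x)
    (hA : ThreeAPFree (A : Set G)) (hD : J * rankGain (logSiftedDensity L) ≤ D)
    (hlarge : ∀ Γ : Finset (AddChar G ℂ), #Γ ≤ D →
      4 * 4 ^ (L + 1) ≤ (#(bohrSet Γ (1 / incrementLoss L D ^ J)) : ℝ))
    (h : HasDensityOnBohrSet A (1 / 2 ^ L) 0 1) (hj : j ≤ J) :
    HasDensityOnBohrSet A ((1 + 1 / 500) ^ j / 2 ^ L) (j * rankGain (logSiftedDensity L))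
      (1 / incrementLoss L D ^ j) := by
  induction j with
  | zero => simpa using h
  | succ j ih =>
    have hDj : (j + 1) * rankGain (logSiftedDensity L) ≤ D := (Nat.mul_le_mul_right _ hj).trans hD
    rw [add_one_mul] at hDj ⊢
    have hD0 : D ≠ 0 := by have := rankGain_pos (logSiftedDensity L); lia
    have hloss : (1 : ℝ) ≤ incrementLoss L D := by exact_mod_cast incrementLoss_pos L hD0
    have hpow : (1 : ℝ) ≤ incrementLoss L D ^ j := one_le_pow₀ hloss
    rw [pow_succ', mul_div_assoc, pow_succ (incrementLoss L D : ℝ), ← div_div]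
    refine (ih (by lia)).increment h2 hA hDj (by positivity)
      ((div_le_self zero_le_one hpow).trans one_le_two) ?_ fun Γ hΓ ↦ ?_
    · gcongr
      exact one_le_pow₀ (by norm_num)
    · refine (hlarge Γ (hΓ.trans (le_of_add_le_left hDj))).trans (card_bohrSet_mono ?_)
      rw [div_div, ← pow_succ]
      gcongr

end Iteration

/-- The number of density increments after which a density of at least `2 ^ (-L)` would have
grown beyond `1`. -/
def iterationCount (L : ℕ) : ℕ := 500 * L + 1

/-- The rank of the Bohr set reached after `iterationCount L` density increments. -/
def finalRank (L : ℕ) : ℕ := iterationCount L * rankGain (logSiftedDensity L)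

/-- A bound for the binary logarithm of the factor by which the radius shrinks in each of the
`iterationCount L` density increments. -/
def logIncrementLoss (L : ℕ) : ℕ :=
  L + 76 + walkLength (logSiftedDensity L) + rankGain (logSiftedDensity L) + logSiftedDensity L +
    6 * finalRank L

/-- Groups with at least `2 ^ logOrderThreshold L` elements, on which doubling is injective,
contain no set of density `2 ^ (-L)` without three-term progressions. It matters only that this is
bounded by a polynomial in `L`. -/
def logOrderThreshold (L : ℕ) : ℕ :=
  2 * L + 4 + 7 * (finalRank L * (logIncrementLoss L * iterationCount L + 1))

lemma finalRank_ne_zero (L : ℕ) : finalRank L ≠ 0 :=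
  mul_ne_zero (Nat.succ_ne_zero _) (rankGain_pos _).ne'

lemma two_pow_lt_pow_iterationCount (L : ℕ) :
    (2 : ℝ) ^ L < (1 + 1 / 500) ^ iterationCount L := by
  have bernoulli : (2 : ℝ) ≤ (1 + 1 / 500) ^ 500 :=
    le_trans (by norm_num) (one_add_mul_le_pow (by norm_num : (-2 : ℝ) ≤ 1 / 500) 500)
  calc (2 : ℝ) ^ L ≤ ((1 + 1 / 500) ^ 500) ^ L := by gcongr
    _ < ((1 + 1 / 500) ^ 500) ^ L * (1 + 1 / 500) :=
      lt_mul_of_one_lt_right (by positivity) (by norm_num)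
    _ = (1 + 1 / 500) ^ iterationCount L := by rw [← pow_mul, ← pow_succ, iterationCount]

theorem two_pow_mul_addRothNumber_lt_card {G : Type*} [AddCommGroup G] [Fintype G] [DecidableEq G]
    {L : ℕ} (h2 : Function.Injective fun x : G ↦ x + x)
    (hG : 2 ^ logOrderThreshold L ≤ Fintype.card G) :
    2 ^ L * addRothNumber (univ : Finset G) < Fintype.card G := by
  obtain ⟨A, -, hcard, hA⟩ := addRothNumber_spec (univ : Finset G)
  rw [← hcard]
  by_contra! hdense
  obtain ⟨Γ, ρ, x, -, -, -, hα⟩ := (hasDensityOnBohrSet_zero 1 hdense).iterate (D := finalRank L)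
    h2 hA le_rfl (fun Γ hΓ ↦ four_mul_four_pow_le_card_bohrSet
      (incrementLoss_pos L (finalRank_ne_zero L)) (incrementLoss_le_two_pow L (finalRank L)) hΓ hG)
    le_rfl
  have hle := (div_le_one (by positivity)).1 (hα.trans densityOn_le_one)
  exact (two_pow_lt_pow_iterationCount L).not_ge hle

/-! ### Roth numbers of intervals -/

lemma two_pow_mul_rothNumberNat_le {L n : ℕ} (hn : 2 ^ logOrderThreshold L ≤ 2 * n) :
    2 ^ L * rothNumberNat n ≤ 2 * n := by
  have hodd : (Nat.card (Fin (2 * n + 1))).Coprime 2 := by simp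
  have h2 : Function.Injective fun x : Fin (2 * n + 1) ↦ x + x := by
    simpa only [← two_nsmul, nsmulCoprime_apply] using! (nsmulCoprime hodd).injective
  have hroth : addRothNumber (Iio (⟨n, by lia⟩ : Fin (2 * n + 1))) = rothNumberNat n :=
    Fin.addRothNumber_eq_rothNumberNat le_rfl
  have hlt := two_pow_mul_addRothNumber_lt_card (L := L) h2 (by rw [Fintype.card_fin]; lia)
  rw [Fintype.card_fin] at hlt
  rw [← hroth]
  exact (Nat.mul_le_mul_left _ (addRothNumber.mono (subset_univ _))).trans (Nat.lt_succ_iff.1 hlt)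

section Polynomial

open Polynomial Filter Asymptotics

lemma exists_eval_eq_logSiftedDensity : ∃ P : ℕ[X], ∀ L, P.eval L = logSiftedDensity L :=
  ⟨(X + 1) * (20 * (4 * (2 * (X + 2)) + 19) + (2 * (X + 2) + 1)) + 2, fun L ↦ by
    simp [logSiftedDensity, siftingExponent, momentExponent]⟩

lemma exists_eval_eq_rankGain : ∃ P : ℕ[X], ∀ h, P.eval h = rankGain h :=
  ⟨8 * ((X + 1) * (64000000 * (X + 13) ^ 2 * (X + 15 + (X + 13))) + 1 + 3), fun h ↦ by
    simp [rankGain, changRank, logPeriodDensity, sampleSize, walkLength]⟩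

lemma exists_eval_eq_logOrderThreshold : ∃ P : ℕ[X], ∀ L, P.eval L = logOrderThreshold L := by
  obtain ⟨H, hH⟩ := exists_eval_eq_logSiftedDensity
  obtain ⟨R, hR⟩ := exists_eval_eq_rankGain
  obtain ⟨D, hD⟩ : ∃ D : ℕ[X], ∀ L, D.eval L = finalRank L :=
    ⟨(500 * X + 1) * R.comp H, fun L ↦ by simp [finalRank, iterationCount, hH, hR]⟩
  exact ⟨2 * X + 4 + 7 * (D * ((X + 76 + (H + 13) + R.comp H + H + 6 * D) * (500 * X + 1) + 1)),
    fun L ↦ by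
      simp [logOrderThreshold, logIncrementLoss, iterationCount, walkLength, hH, hR, hD]⟩

lemma isLittleO_eval_natCast_const_pow (P : ℝ[X]) {r : ℝ} (hr : 1 < r) :
    (fun n : ℕ ↦ P.eval (n : ℝ)) =o[atTop] fun n ↦ r ^ n := by
  simp only [eval_eq_sum_range]
  exact .fun_sum fun i _ ↦ (isLittleO_pow_const_const_pow_of_one_lt i hr).const_mul_left _

lemma eventually_eval_le_two_pow (P : ℕ[X]) : ∀ᶠ n in atTop, P.eval n ≤ 2 ^ n := by
  have hlittle := isLittleO_eval_natCast_const_pow (P.map (Nat.castRingHom ℝ)) one_lt_two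
  filter_upwards [hlittle.eventuallyLE] with n hn
  rw [eval_natCast_map, eq_natCast] at hn
  simp only [Real.norm_natCast, norm_pow, Real.norm_ofNat] at hn
  exact_mod_cast hn

lemma eventually_logOrderThreshold_log_le :
    ∀ᶠ k in atTop, logOrderThreshold (2 * Nat.log 2 k) ≤ k := by
  obtain ⟨P, hP⟩ := exists_eval_eq_logOrderThreshold
  have hlog : Tendsto (Nat.log 2) atTop atTop :=
    tendsto_atTop_atTop_of_monotone Nat.log_monotone fun b ↦
      ⟨2 ^ b, (Nat.log_pow one_lt_two b).ge⟩
  filter_upwards [hlog.eventually (eventually_eval_le_two_pow (P.comp (2 * X))),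
    eventually_ne_atTop 0] with k hk hk0
  have heval : (P.comp (2 * X)).eval (Nat.log 2 k) = logOrderThreshold (2 * Nat.log 2 k) := by
    simp [hP]
  exact heval.ge.trans (hk.trans (Nat.pow_log_le_self 2 hk0))

end Polynomial

lemma sq_le_four_mul_two_pow_log (k : ℕ) : k ^ 2 ≤ 4 * 2 ^ (2 * Nat.log 2 k) :=
  calc k ^ 2 ≤ (2 ^ (Nat.log 2 k + 1)) ^ 2 := by
        gcongr
        exact (Nat.lt_pow_succ_log_self one_lt_two k).le
    _ = 4 * 2 ^ (2 * Nat.log 2 k) := by ring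

lemma summable_rothNumberNat_two_pow_div :
    Summable fun k : ℕ ↦ (rothNumberNat (2 ^ k) : ℝ) / 2 ^ k := by
  have hsum : Summable fun k : ℕ ↦ 8 * (1 / (k : ℝ) ^ 2) :=
    (Real.summable_one_div_nat_pow.2 one_lt_two).mul_left 8
  refine hsum.of_norm_bounded_eventually_nat ?_
  filter_upwards [eventually_logOrderThreshold_log_le, Filter.eventually_gt_atTop 0] with k hk hk0
  have hroth : 2 ^ (2 * Nat.log 2 k) * rothNumberNat (2 ^ k) ≤ 2 * 2 ^ k :=
    two_pow_mul_rothNumberNat_le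
      ((Nat.pow_le_pow_right two_pos hk).trans (Nat.le_mul_of_pos_left _ two_pos))
  have hnat : rothNumberNat (2 ^ k) * k ^ 2 ≤ 8 * 2 ^ k := by
    have := Nat.mul_le_mul_left (rothNumberNat (2 ^ k)) (sq_le_four_mul_two_pow_log k)
    linarith
  rw [Real.norm_of_nonneg (by positivity), mul_one_div,
    div_le_div_iff₀ (by positivity) (by positivity)]
  exact_mod_cast hnat

/-! ### Sums of reciprocals -/

lemma summable_of_summable_sum_Ico_two_pow {f : ℕ → ℝ} (hf : ∀ n, 0 ≤ f n)
    (hsum : Summable fun k ↦ ∑ n ∈ Ico (2 ^ k) (2 ^ (k + 1)), f n) : Summable f := by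
  have hdyadic (k : ℕ) : ∑ n ∈ range (2 ^ k), f n =
      f 0 + ∑ j ∈ range k, ∑ n ∈ Ico (2 ^ j) (2 ^ (j + 1)), f n := by
    induction k with
    | zero => simp
    | succ k ih =>
      rw [sum_range_succ, ← add_assoc, ← ih,
        sum_range_add_sum_Ico _ (Nat.pow_le_pow_right two_pos k.le_succ)]
  refine summable_of_sum_range_le hf
    (c := f 0 + ∑' k, ∑ n ∈ Ico (2 ^ k) (2 ^ (k + 1)), f n) fun k ↦ ?_
  calc ∑ n ∈ range k, f n ≤ ∑ n ∈ range (2 ^ k), f n :=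
        sum_le_sum_of_subset_of_nonneg (range_subset_range.2 Nat.lt_two_pow_self.le)
          fun n _ _ ↦ hf n
    _ = f 0 + ∑ j ∈ range k, ∑ n ∈ Ico (2 ^ j) (2 ^ (j + 1)), f n := hdyadic k
    _ ≤ _ := by
      gcongr
      exact hsum.sum_le_tsum _ fun j _ ↦ sum_nonneg fun n _ ↦ hf n

lemma sum_Ico_two_pow_indicator_le {A : Set ℕ} (hA : ThreeAPFree A) (k : ℕ) :
    ∑ n ∈ Ico (2 ^ k) (2 ^ (k + 1)), A.indicator (fun n ↦ (1 : ℝ) / n) n ≤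
      rothNumberNat (2 ^ k) / 2 ^ k := by
  classical
  have hcard : #{n ∈ Ico (2 ^ k) (2 ^ (k + 1)) | n ∈ A} ≤ rothNumberNat (2 ^ k) := by
    have hroth := addRothNumber_Ico (2 ^ k) (2 ^ (k + 1))
    rw [pow_succ, mul_two, Nat.add_sub_cancel, ← mul_two, ← pow_succ] at hroth
    rw [← hroth]
    exact (hA.mono fun n hn ↦ (mem_filter.1 hn).2).le_addRothNumber (filter_subset _ _)
  simp only [Set.indicator_apply]
  rw [← sum_filter]
  calc ∑ n ∈ Ico (2 ^ k) (2 ^ (k + 1)) with n ∈ A, (1 : ℝ) / n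
      ≤ #{n ∈ Ico (2 ^ k) (2 ^ (k + 1)) | n ∈ A} • ((1 : ℝ) / 2 ^ k) := by
        refine sum_le_card_nsmul _ _ _ fun n hn ↦ one_div_le_one_div_of_le (by positivity) ?_
        exact_mod_cast (mem_Ico.1 (mem_filter.1 hn).1).1
    _ ≤ rothNumberNat (2 ^ k) / 2 ^ k := by
        rw [nsmul_eq_mul, mul_one_div]
        gcongr

theorem summable_indicator_one_div_of_threeAPFree {A : Set ℕ} (hA : ThreeAPFree A) :
    Summable (A.indicator fun n ↦ (1 : ℝ) / n) := by
  have hnonneg (n : ℕ) : 0 ≤ A.indicator (fun n ↦ (1 : ℝ) / n) n :=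
    Set.indicator_nonneg (fun _ _ ↦ by positivity) n
  refine summable_of_summable_sum_Ico_two_pow hnonneg
    (summable_rothNumberNat_two_pow_div.of_nonneg_of_le (fun k ↦ sum_nonneg fun n _ ↦ hnonneg n) ?_)
  exact sum_Ico_two_pow_indicator_le hA

end KelleyMeka

open scoped Classical in
/-- **The first non-trivial case of Erdős's conjecture on arithmetic progressions.**
If `A` is a set of positive integers whose sum of reciprocals diverges (i.e. the
partial sums `∑_{n ∈ A, n ≤ N} 1/n` are unbounded), then `A` contains infinitely
many non-trivial three-term arithmetic progressions. -/
theorem erdos_ap_first_case (A : Set ℕ) (hpos : ∀ n ∈ A, 0 < n)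
    (hdiv : ∀ M : ℝ, ∃ N : ℕ,
      M ≤ ∑ n ∈ Finset.range (N + 1), (if n ∈ A then (1 : ℝ) / n else 0)) :
    {p : ℕ × ℕ × ℕ |
      p.1 ∈ A ∧ p.2.1 ∈ A ∧ p.2.2 ∈ A ∧ p.1 + p.2.1 = 2 * p.2.2 ∧ p.1 ≠ p.2.1}.Infinite := by
  intro hfin
  obtain ⟨M, hM⟩ := (hfin.image Prod.fst).bddAbove
  have htail : ThreeAPFree (A \ Set.Iic M) := by
    rw [threeAPFree_iff_eq_right]
    rintro x ⟨hx, hxM⟩ z ⟨hz, -⟩ y ⟨hy, -⟩ hxyz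
    by_contra hne
    exact hxM (hM ⟨(x, y, z), ⟨hx, hy, hz, hxyz.trans (two_mul z).symm, hne⟩, rfl⟩)
  have hsum : Summable (A.indicator fun n ↦ (1 : ℝ) / n) := by
    refine (KelleyMeka.summable_indicator_one_div_of_threeAPFree htail).congr_cofinite ?_
    filter_upwards [(Set.finite_Iic M).compl_mem_cofinite] with n hn
    simp only [Set.indicator_apply, Set.mem_sdiff]
    exact if_congr (and_iff_left hn) rfl rfl
  obtain ⟨N, hN⟩ := hdiv (∑' n, A.indicator (fun n ↦ (1 : ℝ) / n) n + 1)
  have hle := hsum.sum_le_tsum (Finset.range (N + 1)) fun n _ ↦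
    Set.indicator_nonneg (fun _ _ ↦ by positivity) n
  simp only [Set.indicator_apply] at hN hle
  linarith
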